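/- arXiv:2307.01815 — 2 statements merged into one kernel-verified Lean document; each statement's English description precedes it below -/
import Mathlib

section
/- The equation Y² = X⁵ − 3⁶·5⁷ (that is, Y² = X⁵ − 56953125) has no rational solutions (X, Y) ∈ ℚ × ℚ. -/
theorem thue_aux (n : ℕ) (hn : 0 < n) : ∃ A B : ℕ, n < A * B ∧ 0 < B ∧ 0 < A ∧
    (A - 1) ^ 2 ≤ n ∧ (B - 1) ^ 2 < n := by
  have h1 := Nat.sqrt_le' n
  have h2 := Nat.lt_succ_sqrt' n
  set s := Nat.sqrt n with hs
  have hs0 : 0 < s := by rw [hs]; exact Nat.sqrt_pos.mpr hn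
  clear_value s
  rcases Nat.lt_or_ge (s ^ 2) n with h | h
  · refine ⟨s + 1, s + 1, ?_, by omega, by omega, ?_, ?_⟩
    · rw [← sq]; exact h2
    · simpa using h1
    · simpa using h
  · refine ⟨s + 1, s, ?_, hs0, by omega, ?_, ?_⟩
    · nlinarith
    · simpa using h1
    · obtain ⟨k, rfl⟩ : ∃ k, s = k + 1 := ⟨s - 1, by omega⟩
      simp only [Nat.add_sub_cancel]
      nlinarith

theorem thue (n : ℕ) (hn : 0 < n) (r : ℤ) : ∃ u v : ℤ, (u ≠ 0 ∨ v ≠ 0) ∧ u ^ 2 ≤ n ∧ v ^ 2 < n ∧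
    (n : ℤ) ∣ u - r * v := by
  obtain ⟨A, B, hAB, hB, hA, h1, h2⟩ := thue_aux n hn
  have : NeZero n := ⟨hn.ne'⟩
  obtain ⟨p, hp, q, hq, hpq, he⟩ := Finset.exists_ne_map_eq_of_card_lt_of_maps_to
    (s := Finset.range A ×ˢ Finset.range B) (t := (Finset.univ : Finset (ZMod n)))
    (f := fun p => (p.1 : ZMod n) - (r : ZMod n) * (p.2 : ZMod n))
    (by simpa [ZMod.card] using hAB) (by intro a _; simp)
  simp only [Finset.mem_product, Finset.mem_range] at hp hq
  refine ⟨(p.1 : ℤ) - q.1, (p.2 : ℤ) - q.2, ?_, ?_, ?_, ?_⟩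
  · by_contra hc
    push Not at hc
    apply hpq
    ext
    · have := hc.1; omega
    · have := hc.2; omega
  · have : ((p.1 : ℤ) - q.1) ^ 2 ≤ ((A - 1 : ℕ) : ℤ) ^ 2 := by
      apply sq_le_sq'  <;> omega
    have h1' : (((A - 1 : ℕ) : ℤ)) ^ 2 ≤ n := by exact_mod_cast h1
    linarith
  · have : ((p.2 : ℤ) - q.2) ^ 2 ≤ ((B - 1 : ℕ) : ℤ) ^ 2 := by
      apply sq_le_sq'  <;> omega
    have h1' : (((B - 1 : ℕ) : ℤ)) ^ 2 < n := by exact_mod_cast h2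
    linarith
  · rw [← ZMod.intCast_zmod_eq_zero_iff_dvd]
    push_cast
    linear_combination he

theorem core (d x y : ℤ) (n : ℕ) (hn : 0 < n) (hxy : IsCoprime x y)
    (hN : (n : ℤ) ^ 5 ∣ x ^ 2 - d * y ^ 2) : ∃ r : ℤ, (n : ℤ) ∣ r ^ 2 - d ∧
    (∃ u v : ℤ, (u ≠ 0 ∨ v ≠ 0) ∧ u ^ 2 ≤ n ∧ v ^ 2 < n ∧ (n : ℤ) ∣ u - r * v ∧
      (n : ℤ) ∣ u ^ 2 - d * v ^ 2) ∧ ∀ u v : ℤ, (n : ℤ) ∣ u - r * v →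
    (n : ℤ) ^ 5 ∣ x * (u ^ 5 + 10 * d * u ^ 3 * v ^ 2 + 5 * d ^ 2 * u * v ^ 4) -
      d * y * (5 * u ^ 4 * v + 10 * d * u ^ 2 * v ^ 3 + d ^ 2 * v ^ 5) ∧
    (n : ℤ) ^ 5 ∣ y * (u ^ 5 + 10 * d * u ^ 3 * v ^ 2 + 5 * d ^ 2 * u * v ^ 4) -
      x * (5 * u ^ 4 * v + 10 * d * u ^ 2 * v ^ 3 + d ^ 2 * v ^ 5) := by
  have hc : IsCoprime y ((n : ℤ) ^ 5) := by
    have h1 : IsCoprime y (x ^ 2 - d * y ^ 2) := by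
      have : IsCoprime y (x ^ 2) := hxy.symm.pow_right
      have h2 := this.add_mul_left_right (-(d * y))
      have e : x ^ 2 - d * y ^ 2 = x ^ 2 + y * (-(d * y)) := by ring
      rw [e]; exact h2
    exact h1.of_isCoprime_of_dvd_right hN
  obtain ⟨p, q, hpq⟩ := hc
  obtain ⟨w, hw⟩ := hN
  have hr1 : (n : ℤ) ^ 5 ∣ x - (x * p) * y := ⟨x * q, by linear_combination (-x) * hpq⟩
  generalize hr : x * p = r at hr1
  have hr2 : (n : ℤ) ^ 5 ∣ r ^ 2 - d := by
    obtain ⟨e, he⟩ := hr1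
    have hcy : IsCoprime ((n : ℤ) ^ 5) (y ^ 2) :=
      (show IsCoprime y ((n : ℤ) ^ 5) from ⟨p, q, hpq⟩).symm.pow_right
    apply hcy.dvd_of_dvd_mul_left
    exact ⟨w - e * (x + r * y), by linear_combination hw - (x + r * y) * he⟩
  have hr3 : (n : ℤ) ∣ r ^ 2 - d := (dvd_pow_self _ (by norm_num)).trans hr2
  refine ⟨r, hr3, ?_, ?_⟩
  · obtain ⟨u, v, h0, hu, hv, k, hk⟩ := thue n hn r
    refine ⟨u, v, h0, hu, hv, ⟨k, hk⟩, ?_⟩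
    obtain ⟨e, he⟩ := hr3
    exact ⟨k * (u + r * v) + e * v ^ 2, by linear_combination (u + r * v) * hk + v ^ 2 * he⟩
  · intro u v hd
    have h5 := pow_dvd_pow_of_dvd hd 5
    have hUV : (n : ℤ) ^ 5 ∣ (u ^ 5 + 10 * d * u ^ 3 * v ^ 2 + 5 * d ^ 2 * u * v ^ 4) -
        r * (5 * u ^ 4 * v + 10 * d * u ^ 2 * v ^ 3 + d ^ 2 * v ^ 5) := by
      have := dvd_sub h5 (hr2.mul_right (10 * u ^ 3 * v ^ 2 - 10 * u ^ 2 * v ^ 3 * r +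
        5 * u * v ^ 4 * (r ^ 2 + d) - v ^ 5 * r * (r ^ 2 + d)))
      obtain ⟨z, hz⟩ := this
      exact ⟨z, by linear_combination hz⟩
    generalize (u ^ 5 + 10 * d * u ^ 3 * v ^ 2 + 5 * d ^ 2 * u * v ^ 4) = U at *
    generalize (5 * u ^ 4 * v + 10 * d * u ^ 2 * v ^ 3 + d ^ 2 * v ^ 5) = V at *
    obtain ⟨a, ha⟩ := hUV
    obtain ⟨b, hb⟩ := hr1
    obtain ⟨c, hc⟩ := hr2
    exact ⟨⟨x * a + r * V * b + y * V * c, by linear_combination x * ha + r * V * hb + y * V * hc⟩,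
      ⟨y * a - V * b, by linear_combination y * ha - V * hb⟩⟩
theorem fifth_neg_aux (x y u v : ℤ) (n : ℤ) (h : ℤ) (hn : 0 < n) (hx : x ^ 2 + 5 * y ^ 2 = n ^ 5)
    (hu : u ^ 2 + 5 * v ^ 2 = h * n)
    (h1 : n ^ 5 ∣ x * (u ^ 5 + 10 * (-5) * u ^ 3 * v ^ 2 + 5 * (-5) ^ 2 * u * v ^ 4) -
      (-5) * y * (5 * u ^ 4 * v + 10 * (-5) * u ^ 2 * v ^ 3 + (-5) ^ 2 * v ^ 5))
    (h2 : n ^ 5 ∣ y * (u ^ 5 + 10 * (-5) * u ^ 3 * v ^ 2 + 5 * (-5) ^ 2 * u * v ^ 4) -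
      x * (5 * u ^ 4 * v + 10 * (-5) * u ^ 2 * v ^ 3 + (-5) ^ 2 * v ^ 5)) :
    ∃ g k : ℤ, g ^ 2 + 5 * k ^ 2 = h ^ 5 ∧
      h ^ 5 * x = g * (u ^ 5 - 50 * u ^ 3 * v ^ 2 + 125 * u * v ^ 4)
        - 5 * k * (5 * v * (u ^ 4 - 10 * u ^ 2 * v ^ 2 + 5 * v ^ 4)) ∧
      h ^ 5 * y = g * (5 * v * (u ^ 4 - 10 * u ^ 2 * v ^ 2 + 5 * v ^ 4)) +
        k * (u ^ 5 - 50 * u ^ 3 * v ^ 2 + 125 * u * v ^ 4) := by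
  obtain ⟨g, hg⟩ := h1
  obtain ⟨k, hk⟩ := h2
  have hUV : (u ^ 5 - 50 * u ^ 3 * v ^ 2 + 125 * u * v ^ 4) ^ 2 +
      5 * (5 * v * (u ^ 4 - 10 * u ^ 2 * v ^ 2 + 5 * v ^ 4)) ^ 2 = h ^ 5 * n ^ 5 := by
    have : (u ^ 2 + 5 * v ^ 2) ^ 5 = h ^ 5 * n ^ 5 := by rw [hu]; ring
    rw [← this]; ring
  have e1 : u ^ 5 + 10 * (-5) * u ^ 3 * v ^ 2 + 5 * (-5) ^ 2 * u * v ^ 4 =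
    u ^ 5 - 50 * u ^ 3 * v ^ 2 + 125 * u * v ^ 4 := by ring
  have e2 : 5 * u ^ 4 * v + 10 * (-5) * u ^ 2 * v ^ 3 + (-5) ^ 2 * v ^ 5 =
    5 * v * (u ^ 4 - 10 * u ^ 2 * v ^ 2 + 5 * v ^ 4) := by ring
  rw [e1, e2] at hg hk
  generalize u ^ 5 - 50 * u ^ 3 * v ^ 2 + 125 * u * v ^ 4 = U at *
  generalize 5 * v * (u ^ 4 - 10 * u ^ 2 * v ^ 2 + 5 * v ^ 4) = V at *
  have hn5 : n ^ 5 ≠ 0 := by positivity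
  refine ⟨g, k, ?_, ?_, ?_⟩
  · apply mul_left_cancel₀ (mul_ne_zero hn5 hn5)
    linear_combination (-(x * U + 5 * y * V) - n ^ 5 * g) * hg +
      (-5 * (y * U - x * V) - 5 * n ^ 5 * k) * hk + (U ^ 2 + 5 * V ^ 2) * hx + n ^ 5 * hUV
  · apply mul_left_cancel₀ hn5
    linear_combination -x * hUV + U * hg - 5 * V * hk
  · apply mul_left_cancel₀ hn5
    linear_combination -y * hUV + V * hg + U * hk

theorem fifth_neg (x y t : ℤ) (hxy : IsCoprime x y) (hx : x ^ 2 + 5 * y ^ 2 = t ^ 5)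
    (ht2 : ¬ (2 : ℤ) ∣ t) (ht5 : ¬ (5 : ℤ) ∣ t) :
    ∃ u v : ℤ, x = u ^ 5 - 50 * u ^ 3 * v ^ 2 + 125 * u * v ^ 4 ∧
      y = 5 * v * (u ^ 4 - 10 * u ^ 2 * v ^ 2 + 5 * v ^ 4) := by
  have ht0 : t ≠ 0 := by rintro rfl; simp at ht2
  have ht : 0 < t := by
    have : 0 ≤ t ^ 5 := by rw [← hx]; positivity
    have := (Odd.pow_nonneg_iff (by decide : Odd 5)).1 this
    omega
  lift t to ℕ using ht.le
  obtain ⟨r, hr, ⟨u, v, h0, hu, hv, huv, h, hh⟩, H⟩ := core (-5) x y t (by exact_mod_cast ht) hxy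
    ⟨1, by linear_combination hx⟩
  -- the case of norm exactly t suffices
  have main : ∀ u v : ℤ, (t : ℤ) ∣ u - r * v → u ^ 2 + 5 * v ^ 2 = t → 
      ∃ u v : ℤ, x = u ^ 5 - 50 * u ^ 3 * v ^ 2 + 125 * u * v ^ 4 ∧
      y = 5 * v * (u ^ 4 - 10 * u ^ 2 * v ^ 2 + 5 * v ^ 4) := by
    intro u v hd hn
    obtain ⟨g, k, hgk, e1, e2⟩ := fifth_neg_aux x y u v t 1 ht hx (by linarith) (H u v hd).1 (H u v hd).2
    have hk : k = 0 := by
      by_contra hk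
      have : 0 < k ^ 2 := by positivity
      nlinarith [sq_nonneg g]
    subst hk
    have hg : (g - 1) * (g + 1) = 0 := by linear_combination hgk
    rcases mul_eq_zero.1 hg with hg | hg
    · obtain rfl : g = 1 := by omega
      exact ⟨u, v, by linear_combination e1, by linear_combination e2⟩
    · obtain rfl : g = -1 := by omega
      exact ⟨-u, -v, by linear_combination e1, by linear_combination e2⟩
  have hpos : 0 < u ^ 2 + 5 * v ^ 2 := by
    rcases h0 with h0 | h0
    · have : 0 < u ^ 2 := by positivity
      nlinarith [sq_nonneg v]
    · have : 0 < v ^ 2 := by positivity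
      nlinarith [sq_nonneg u]
  have hh' : u ^ 2 + 5 * v ^ 2 = h * t := by linear_combination hh
  have hh1 : 0 < h := by
    by_contra hc
    push Not at hc
    nlinarith
  have hh6 : h < 6 := by
    by_contra hc
    push Not at hc
    nlinarith
  obtain ⟨g, k, hgk, -, -⟩ := fifth_neg_aux x y u v t h ht hx hh' (H u v huv).1 (H u v huv).2
  have ht2' : (t : ℤ) % 2 = 1 := by omega
  have hc2 : IsCoprime (t : ℤ) 2 := ((Int.prime_two.coprime_iff_not_dvd).2 ht2).symm
  have hc5 : IsCoprime (t : ℤ) 5 := (((by norm_num : Prime (5 : ℤ)).coprime_iff_not_dvd).2 ht5).symm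
  interval_cases h
  · exact main u v huv (by linarith)
  · exfalso
    have hk : k ^ 2 ≤ 6 := by nlinarith [sq_nonneg g]
    have a1 : k ≤ 2 := by nlinarith
    have a2 : -2 ≤ k := by nlinarith
    have b1 : g ≤ 5 := by nlinarith [sq_nonneg k]
    have b2 : -5 ≤ g := by nlinarith [sq_nonneg k]
    interval_cases k <;> interval_cases g <;> omega
  · exfalso
    have hk : k ^ 2 ≤ 48 := by nlinarith [sq_nonneg g]
    have a1 : k ≤ 6 := by nlinarith
    have a2 : -6 ≤ k := by nlinarith
    have b1 : g ≤ 15 := by nlinarith [sq_nonneg k]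
    have b2 : -15 ≤ g := by nlinarith [sq_nonneg k]
    interval_cases k <;> interval_cases g <;> omega
  · -- both even
    have : 2 ∣ u ∧ 2 ∣ v := by
      rcases Int.even_or_odd' u with ⟨a, rfl | rfl⟩ <;> rcases Int.even_or_odd' v with ⟨b, rfl | rfl⟩
      · exact ⟨⟨_, rfl⟩, ⟨_, rfl⟩⟩
      · ring_nf at hh'; omega
      · ring_nf at hh'; omega
      · exfalso
        have ea : Even (a * (a + 1)) := Int.even_mul_succ_self a
        have eb : Even (b * (b + 1)) := Int.even_mul_succ_self b
        obtain ⟨p, hp⟩ := ea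
        obtain ⟨q, hq⟩ := eb
        have : (4 : ℤ) * t = 8 * p + 40 * q + 6 := by linear_combination -hh' + 4 * hp + 20 * hq
        omega
    obtain ⟨⟨a, rfl⟩, ⟨b, rfl⟩⟩ := this
    refine main a b (hc2.dvd_of_dvd_mul_left ?_) (by linarith)
    obtain ⟨z, hz⟩ := huv
    exact ⟨z, by linear_combination hz⟩
  · have : (5 : ℤ) ∣ u := by
      have : (5 : ℤ) ∣ u ^ 2 := ⟨t - v ^ 2, by linear_combination hh'⟩
      exact (by norm_num : Prime (5 : ℤ)).dvd_of_dvd_pow this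
    obtain ⟨a, rfl⟩ := this
    refine main v (-a) (hc5.dvd_of_dvd_mul_left ?_) (by linarith)
    obtain ⟨z, hz⟩ := huv
    obtain ⟨w, hw⟩ := hr
    exact ⟨r * z + w * v, by linear_combination r * hz + v * hw⟩
theorem unit_fifth : ∀ N : ℕ, ∀ g k : ℤ, k.natAbs = N → (g ^ 2 - 5 * k ^ 2 = 4 ∨ g ^ 2 - 5 * k ^ 2 = -4) →
    (5 : ℤ) ∣ k → ∃ m n : ℤ, (m ^ 2 - 5 * n ^ 2 = 4 ∨ m ^ 2 - 5 * n ^ 2 = -4) ∧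
      16 * g = m * (m ^ 4 + 50 * m ^ 2 * n ^ 2 + 125 * n ^ 4) ∧
      16 * k = 5 * n * (m ^ 4 + 10 * m ^ 2 * n ^ 2 + 5 * n ^ 4) := by
  intro N
  induction N using Nat.strong_induction_on with
  | _ N ih =>
  have key : ∀ g k : ℤ, k.natAbs = N → 0 ≤ g → 0 < k →
      (g ^ 2 - 5 * k ^ 2 = 4 ∨ g ^ 2 - 5 * k ^ 2 = -4) →
      (5 : ℤ) ∣ k → ∃ m n : ℤ, (m ^ 2 - 5 * n ^ 2 = 4 ∨ m ^ 2 - 5 * n ^ 2 = -4) ∧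
      16 * g = m * (m ^ 4 + 50 * m ^ 2 * n ^ 2 + 125 * n ^ 4) ∧
      16 * k = 5 * n * (m ^ 4 + 10 * m ^ 2 * n ^ 2 + 5 * n ^ 4) := by
    intro g k hN hg hk hgk h5
    have hpar : ∃ w, g = k + 2 * w := by
      rcases Int.even_or_odd' g with ⟨a, rfl | rfl⟩ <;> rcases Int.even_or_odd' k with ⟨b, rfl | rfl⟩
      · exact ⟨a - b, by ring⟩
      · exfalso; ring_nf at hgk; omega
      · exfalso; ring_nf at hgk; omega
      · exact ⟨a - b, by ring⟩
    have hk5 : 5 ≤ k := Int.le_of_dvd hk h5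
    have l1 : 9 * k < 5 * g := by
      by_contra hc
      push Not at hc
      have : (5 * g) ^ 2 ≤ (9 * k) ^ 2 := by gcongr
      rcases hgk with h | h <;> nlinarith
    have l2 : 5 * g < 13 * k := by
      by_contra hc
      push Not at hc
      have : (13 * k) ^ 2 ≤ (5 * g) ^ 2 := by gcongr
      rcases hgk with h | h <;> nlinarith
    obtain ⟨w, rfl⟩ := hpar
    obtain ⟨m, n, hmn, e1, e2⟩ := ih (5 * w - 3 * k).natAbs (by omega) (7 * k - 11 * w) (5 * w - 3 * k) rfl
      (by
        rcases hgk with h | h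
        · right; linear_combination -h
        · left; linear_combination -h)
      (by obtain ⟨z, rfl⟩ := h5; exact ⟨w - 3 * z, by ring⟩)
    have hpar : ∃ b, m = 2 * b - n := by
      rcases Int.even_or_odd' m with ⟨a, rfl | rfl⟩ <;> rcases Int.even_or_odd' n with ⟨b, rfl | rfl⟩
      · exact ⟨a + b, by ring⟩
      · exfalso; ring_nf at hmn; omega
      · exfalso; ring_nf at hmn; omega
      · exact ⟨a + b + 1, by ring⟩
    obtain ⟨b, rfl⟩ := hpar
    refine ⟨b + 2 * n, b, ?_, ?_, ?_⟩
    · rcases hmn with h | h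
      · right; linear_combination -h
      · left; linear_combination -h
    · apply mul_left_cancel₀ (two_ne_zero : (2 : ℤ) ≠ 0)
      linear_combination 11 * e1 + 25 * e2
    · apply mul_left_cancel₀ (two_ne_zero : (2 : ℤ) ≠ 0)
      linear_combination 5 * e1 + 11 * e2
  intro g k hN hgk h5
  rcases lt_trichotomy k 0 with hk | hk | hk
  · rcases le_total 0 g with hg | hg
    · obtain ⟨m, n, a, b, c⟩ := key g (-k) (by omega) hg (by omega) (by simpa using hgk) (by simpa using h5)
      exact ⟨m, -n, by simpa using a, by linear_combination b, by linear_combination -c⟩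
    · obtain ⟨m, n, a, b, c⟩ := key (-g) (-k) (by omega) (by omega) (by omega) (by simpa using hgk) (by simpa using h5)
      exact ⟨-m, -n, by simpa using a, by linear_combination -b, by linear_combination -c⟩
  · subst hk
    have : (g - 2) * (g + 2) = 0 := by
      rcases hgk with h | h
      · linear_combination h
      · nlinarith [sq_nonneg g]
    rcases mul_eq_zero.1 this with h | h
    · obtain rfl : g = 2 := by omega
      exact ⟨2, 0, by norm_num⟩
    · obtain rfl : g = -2 := by omega
      exact ⟨-2, 0, by norm_num⟩
  · rcases le_total 0 g with hg | hg
    · exact key g k hN hg hk hgk h5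
    · obtain ⟨m, n, a, b, c⟩ := key (-g) k (by omega) (by omega) (by omega) (by simpa using hgk) h5
      exact ⟨-m, n, by simpa using a, by linear_combination -b, by linear_combination c⟩

/-- final parity step -/
theorem fifth_pos_parity (x y s c d : ℤ) (hs : s = 1 ∨ s = -1) (hy : (2 : ℤ) ∣ y)
    (e1 : 32 * s * x = c * (c ^ 4 + 50 * c ^ 2 * d ^ 2 + 125 * d ^ 4))
    (e2 : 32 * s * y = 5 * d * (c ^ 4 + 10 * c ^ 2 * d ^ 2 + 5 * d ^ 4)) :
    ∃ c d : ℤ, x = c * (c ^ 4 + 50 * c ^ 2 * d ^ 2 + 125 * d ^ 4) ∧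
      y = 5 * d * (c ^ 4 + 10 * c ^ 2 * d ^ 2 + 5 * d ^ 4) := by
  have hs2 : s * s = 1 := by rcases hs with rfl | rfl <;> norm_num
  obtain ⟨y, rfl⟩ := hy
  rcases Int.even_or_odd' c with ⟨a, rfl | rfl⟩ <;> rcases Int.even_or_odd' d with ⟨b, rfl | rfl⟩
  · have f1 : x = s * (a * (a ^ 4 + 50 * a ^ 2 * b ^ 2 + 125 * b ^ 4)) := by
      apply mul_left_cancel₀ (by norm_num : (32 : ℤ) ≠ 0)
      linear_combination s * e1 - 32 * x * hs2
    have f2 : 2 * y = s * (5 * b * (a ^ 4 + 10 * a ^ 2 * b ^ 2 + 5 * b ^ 4)) := by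
      apply mul_left_cancel₀ (by norm_num : (32 : ℤ) ≠ 0)
      linear_combination s * e2 - 64 * y * hs2
    rcases hs with rfl | rfl
    · exact ⟨a, b, by linear_combination f1, by linear_combination f2⟩
    · exact ⟨-a, -b, by linear_combination f1, by linear_combination f2⟩
  · exfalso; ring_nf at e2; omega
  · exfalso; ring_nf at e1; omega
  · exfalso
    obtain ⟨p, hp⟩ : Even (a * (a + 1)) := Int.even_mul_succ_self a
    obtain ⟨q, hq⟩ : Even (b * (b + 1)) := Int.even_mul_succ_self b
    have hc : (2 * a + 1) ^ 2 = 8 * p + 1 := by linear_combination 4 * hp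
    have hd : (2 * b + 1) ^ 2 = 8 * q + 1 := by linear_combination 4 * hq
    have h16 : (2 * a + 1) ^ 4 + 10 * (2 * a + 1) ^ 2 * (2 * b + 1) ^ 2 + 5 * (2 * b + 1) ^ 4 =
        16 * (2 * (2 * p ^ 2 + 3 * p + 5 * q + 20 * p * q + 10 * q ^ 2) + 1) := by
      have : (2 * a + 1) ^ 4 + 10 * (2 * a + 1) ^ 2 * (2 * b + 1) ^ 2 + 5 * (2 * b + 1) ^ 4 =
        ((2 * a + 1) ^ 2) ^ 2 + 10 * (2 * a + 1) ^ 2 * (2 * b + 1) ^ 2 + 5 * ((2 * b + 1) ^ 2) ^ 2 := by ring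
      rw [this, hc, hd]; ring
    rw [h16] at e2
    generalize (2 * p ^ 2 + 3 * p + 5 * q + 20 * p * q + 10 * q ^ 2) = T at e2
    have : 4 * (s * y) = 5 * (2 * b + 1) * (2 * T + 1) := by
      apply mul_left_cancel₀ (by norm_num : (16 : ℤ) ≠ 0)
      linear_combination e2
    ring_nf at this; omega
theorem not_three_dvd (x y : ℤ) (hxy : IsCoprime x y) (h : (3 : ℤ) ∣ x ^ 2 + y ^ 2) : False := by
  have h3 : (3 : ℤ) ∣ x ∧ (3 : ℤ) ∣ y := by
    have hx : x % 3 = 0 ∨ x % 3 = 1 ∨ x % 3 = 2 := by omega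
    have hy : y % 3 = 0 ∨ y % 3 = 1 ∨ y % 3 = 2 := by omega
    have h' := Int.emod_eq_zero_of_dvd h
    rw [Int.add_emod, pow_two, pow_two, Int.mul_emod x, Int.mul_emod y] at h'
    rcases hx with hx | hx | hx <;> rcases hy with hy | hy | hy <;> rw [hx, hy] at h' <;>
      omega
  have := hxy.isUnit_of_dvd' h3.1 h3.2
  rw [Int.isUnit_iff] at this
  omega

theorem fifth_pos (x y t : ℤ) (hxy : IsCoprime x y) (hx : x ^ 2 - 5 * y ^ 2 = t ^ 5)
    (hx2 : ¬ (2 : ℤ) ∣ x) (hx5 : ¬ (5 : ℤ) ∣ x) (hy2 : (2 : ℤ) ∣ y) (hy5 : (5 : ℤ) ∣ y) :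
    ∃ c d : ℤ, x = c * (c ^ 4 + 50 * c ^ 2 * d ^ 2 + 125 * d ^ 4) ∧
      y = 5 * d * (c ^ 4 + 10 * c ^ 2 * d ^ 2 + 5 * d ^ 4) := by
  have ht2 : ¬ (2 : ℤ) ∣ t := by
    intro h
    apply hx2
    have h1 : (2 : ℤ) ∣ t ^ 5 := dvd_pow h (by norm_num)
    have h2 : (2 : ℤ) ∣ x ^ 2 := by
      have : x ^ 2 = t ^ 5 + y * (5 * y) := by linear_combination hx
      rw [this]; exact dvd_add h1 (hy2.mul_right _)
    exact Int.prime_two.dvd_of_dvd_pow h2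
  have ht3 : ¬ (3 : ℤ) ∣ t := by
    intro h
    have h1 : (3 : ℤ) ∣ t ^ 5 := dvd_pow h (by norm_num)
    apply not_three_dvd x y hxy
    obtain ⟨z, hz⟩ := h1
    exact ⟨z + 2 * y ^ 2, by linear_combination hx + hz⟩
  obtain ⟨n, τ, hn0, hτ, hnt⟩ : ∃ (n : ℕ) (τ : ℤ), 0 < n ∧ (τ = 1 ∨ τ = -1) ∧ t = τ * n := by
    rcases lt_trichotomy t 0 with h | h | h
    · exact ⟨t.natAbs, -1, by omega, by simp, by omega⟩
    · subst h; simp at ht2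
    · exact ⟨t.natAbs, 1, by omega, by simp, by omega⟩
  subst hnt
  have hτ5 : τ ^ 5 = τ := by rcases hτ with rfl | rfl <;> norm_num
  have hx' : x ^ 2 - 5 * y ^ 2 = τ * n ^ 5 := by rw [hx, mul_pow, hτ5]
  have hn2 : ¬ (2 : ℤ) ∣ n := fun h => ht2 (h.mul_left _)
  have hn3 : ¬ (3 : ℤ) ∣ n := fun h => ht3 (h.mul_left _)
  obtain ⟨r, hr, ⟨u, v, h0, hu, hv, huv, h, hh⟩, H⟩ := core 5 x y n hn0 hxy
    ⟨τ, by linear_combination hx'⟩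
  have hnz : (0 : ℤ) < n := by exact_mod_cast hn0
  have red : ∃ u v σ : ℤ, (σ = 1 ∨ σ = -1) ∧ (n : ℤ) ∣ u - r * v ∧ u ^ 2 - 5 * v ^ 2 = 4 * σ * n := by
    have hlt : -5 < h := by
      by_contra hc
      push Not at hc
      nlinarith [sq_nonneg u]
    have hgt : h < 2 := by
      by_contra hc
      push Not at hc
      nlinarith [sq_nonneg v]
    have h2d : (n : ℤ) ∣ 2 * u - r * (2 * v) := by
      obtain ⟨z, hz⟩ := huv
      exact ⟨2 * z, by linear_combination 2 * hz⟩
    interval_cases h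
    · exact ⟨u, v, -1, by simp, huv, by linear_combination hh⟩
    · exfalso
      have hc : (3 : ℤ) ∣ u ^ 2 + v ^ 2 := ⟨2 * v ^ 2 - n, by linear_combination hh⟩
      have h3 : (3 : ℤ) ∣ u ∧ (3 : ℤ) ∣ v := by
        have hx : u % 3 = 0 ∨ u % 3 = 1 ∨ u % 3 = 2 := by omega
        have hy : v % 3 = 0 ∨ v % 3 = 1 ∨ v % 3 = 2 := by omega
        have h' := Int.emod_eq_zero_of_dvd hc
        rw [Int.add_emod, pow_two, pow_two, Int.mul_emod u, Int.mul_emod v] at h'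
        rcases hx with hx | hx | hx <;> rcases hy with hy | hy | hy <;> rw [hx, hy] at h' <;>
          omega
      obtain ⟨⟨a, rfl⟩, ⟨b, rfl⟩⟩ := h3
      exact hn3 ⟨5 * b ^ 2 - a ^ 2, by linarith⟩
    · exfalso
      rcases Int.even_or_odd' u with ⟨a, rfl | rfl⟩ <;> rcases Int.even_or_odd' v with ⟨b, rfl | rfl⟩ <;>
        ring_nf at hh <;> omega
    · exact ⟨2 * u, 2 * v, -1, by simp, h2d, by linear_combination 4 * hh⟩
    · exfalso
      have hh' : u ^ 2 = 5 * v ^ 2 := by linear_combination hh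
      have : v ∣ u := by
        rw [← Int.pow_dvd_pow_iff (two_ne_zero)]
        exact ⟨5, by linear_combination hh'⟩
      obtain ⟨w, rfl⟩ := this
      have hv0 : v ≠ 0 := by rintro rfl; simp at h0
      have hw : w ^ 2 = 5 := by
        apply mul_left_cancel₀ (pow_ne_zero 2 hv0)
        linear_combination hh'
      have a1 : w ≤ 2 := by nlinarith
      have a2 : -2 ≤ w := by nlinarith
      interval_cases w <;> omega
    · exact ⟨2 * u, 2 * v, 1, by simp, h2d, by linear_combination 4 * hh⟩
  clear huv hh hu hv h0 h
  obtain ⟨u', v, σ, hσ, huv, hN⟩ := red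
  have hσ2 : σ * σ = 1 := by rcases hσ with rfl | rfl <;> norm_num
  have hτ2 : τ * τ = 1 := by rcases hτ with rfl | rfl <;> norm_num
  obtain ⟨w, rfl⟩ : ∃ w, u' = v + 2 * w := by
    rcases Int.even_or_odd' u' with ⟨a, rfl | rfl⟩ <;> rcases Int.even_or_odd' v with ⟨b, rfl | rfl⟩
    · exact ⟨a - b, by ring⟩
    · exfalso; ring_nf at hN; omega
    · exfalso; ring_nf at hN; omega
    · exact ⟨a - b, by ring⟩
  obtain ⟨h1, h2⟩ := H _ _ huv
  obtain ⟨U, hU⟩ : ∃ U, U = 11 * v ^ 5 + 35 * v ^ 4 * w + 40 * v ^ 3 * w ^ 2 + 30 * v ^ 2 * w ^ 3 + 5 * v * w ^ 4 + 2 * w ^ 5 := ⟨_, rfl⟩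
  obtain ⟨V, hV⟩ : ∃ V, V = 5 * v * (v ^ 4 + 3 * v ^ 3 * w + 4 * v ^ 2 * w ^ 2 + 2 * v * w ^ 3 + w ^ 4) := ⟨_, rfl⟩
  have hc16 : IsCoprime ((n : ℤ) ^ 5) 16 := by
    have : IsCoprime (n : ℤ) 2 := ((Int.prime_two.coprime_iff_not_dvd).2 hn2).symm
    have := (this.pow_left (m := 5)).pow_right (n := 4)
    norm_num at this ⊢
    exact this
  have h1' : (n : ℤ) ^ 5 ∣ x * U - 5 * y * V := by
    apply hc16.dvd_of_dvd_mul_left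
    obtain ⟨z, hz⟩ := h1
    exact ⟨z, by rw [hU, hV]; linear_combination hz⟩
  have h2' : (n : ℤ) ^ 5 ∣ y * U - x * V := by
    apply hc16.dvd_of_dvd_mul_left
    obtain ⟨z, hz⟩ := h2
    exact ⟨z, by rw [hU, hV]; linear_combination hz⟩
  have hUV : U ^ 2 - 5 * V ^ 2 = 4 * σ * n ^ 5 := by
    have hs5 : σ ^ 5 = σ := by rcases hσ with rfl | rfl <;> norm_num
    have : ((v + 2 * w) ^ 2 - 5 * v ^ 2) ^ 5 = 1024 * σ * n ^ 5 := by
      rw [hN, mul_pow, mul_pow, hs5]; norm_num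
    apply mul_left_cancel₀ (by norm_num : (256 : ℤ) ≠ 0)
    rw [hU, hV]
    linear_combination this
  clear h1 h2
  obtain ⟨g, hg⟩ := h1'
  obtain ⟨k, hk⟩ := h2'
  have hn5 : (n : ℤ) ^ 5 ≠ 0 := by positivity
  have hgk : g ^ 2 - 5 * k ^ 2 = 4 * (σ * τ) := by
    apply mul_left_cancel₀ (mul_ne_zero hn5 hn5)
    linear_combination (-(x * U - 5 * y * V) - n ^ 5 * g) * hg +
      (5 * (y * U - x * V) + 5 * n ^ 5 * k) * hk + (U ^ 2 - 5 * V ^ 2) * hx' + τ * n ^ 5 * hUV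
  have f1 : 4 * σ * x = g * U + 5 * k * V := by
    apply mul_left_cancel₀ hn5
    linear_combination -x * hUV + U * hg + 5 * V * hk
  have f2 : 4 * σ * y = g * V + k * U := by
    apply mul_left_cancel₀ hn5
    linear_combination -y * hUV + V * hg + U * hk
  have p5 : Prime (5 : ℤ) := by norm_num
  have hk5 : (5 : ℤ) ∣ k := by
    have : (5 : ℤ) ∣ k * U := by
      obtain ⟨z, rfl⟩ := hy5
      exact ⟨4 * σ * z - g * (v * (v ^ 4 + 3 * v ^ 3 * w + 4 * v ^ 2 * w ^ 2 + 2 * v * w ^ 3 + w ^ 4)),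
        by rw [hV] at f2; linear_combination -f2⟩
    rcases p5.dvd_or_dvd this with h | h
    · exact h
    · exfalso
      apply hx5
      obtain ⟨z, rfl⟩ := h
      have h4 : (5 : ℤ) ∣ 4 * x := ⟨σ * (g * z + k * V), by linear_combination σ * f1 - 4 * x * hσ2⟩
      omega
  obtain ⟨m, e, hme, e1, e2⟩ := unit_fifth _ g k rfl (by
    rcases hσ with rfl | rfl <;> rcases hτ with rfl | rfl <;> norm_num at hgk <;> simp [hgk]) hk5
  obtain ⟨q, rfl⟩ : ∃ w, m = e + 2 * w := by
    rcases Int.even_or_odd' m with ⟨a, rfl | rfl⟩ <;> rcases Int.even_or_odd' e with ⟨b, rfl | rfl⟩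
    · exact ⟨a - b, by ring⟩
    · exfalso; ring_nf at hme; omega
    · exfalso; ring_nf at hme; omega
    · exact ⟨a - b, by ring⟩
  apply fifth_pos_parity x y σ (3 * e * v + e * w + q * v + 2 * q * w) (e * v + q * v + e * w) hσ hy2
  · apply mul_left_cancel₀ (by norm_num : (2 : ℤ) ≠ 0)
    rw [hU, hV] at f1
    linear_combination 16 * f1 + (11 * v ^ 5 + 35 * v ^ 4 * w + 40 * v ^ 3 * w ^ 2 + 30 * v ^ 2 * w ^ 3 + 5 * v * w ^ 4 + 2 * w ^ 5) * e1 + 5 * (5 * v * (v ^ 4 + 3 * v ^ 3 * w + 4 * v ^ 2 * w ^ 2 + 2 * v * w ^ 3 + w ^ 4)) * e2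
  · apply mul_left_cancel₀ (by norm_num : (2 : ℤ) ≠ 0)
    rw [hU, hV] at f2
    linear_combination 16 * f2 + (5 * v * (v ^ 4 + 3 * v ^ 3 * w + 4 * v ^ 2 * w ^ 2 + 2 * v * w ^ 3 + w ^ 4)) * e1 + (11 * v ^ 5 + 35 * v ^ 4 * w + 40 * v ^ 3 * w ^ 2 + 30 * v ^ 2 * w ^ 3 + 5 * v * w ^ 4 + 2 * w ^ 5) * e2
theorem quartic_cop (c d s : ℤ) (hs : s = 1 ∨ s = -1) (hcd : IsCoprime c d) (h2 : ¬ (2 : ℤ) ∣ c + d)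
    (h5 : ¬ (5 : ℤ) ∣ c) : IsCoprime (c ^ 4 + 10 * s * c ^ 2 * d ^ 2 + 5 * d ^ 4) d ∧
      IsCoprime (c ^ 4 + 10 * s * c ^ 2 * d ^ 2 + 5 * d ^ 4) 30 := by
  constructor
  · have h : IsCoprime (c ^ 4) d := hcd.pow_left
    have := h.add_mul_left_left (10 * s * c ^ 2 * d + 5 * d ^ 3)
    have e : c ^ 4 + 10 * s * c ^ 2 * d ^ 2 + 5 * d ^ 4 = c ^ 4 + d * (10 * s * c ^ 2 * d + 5 * d ^ 3) := by
      ring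
    rw [e]; exact this
  · have a2 : IsCoprime (c ^ 4 + 10 * s * c ^ 2 * d ^ 2 + 5 * d ^ 4) 2 := by
      refine ((Int.prime_two.coprime_iff_not_dvd).2 ?_).symm
      intro h
      rcases Int.even_or_odd' c with ⟨a, rfl | rfl⟩ <;> rcases Int.even_or_odd' d with ⟨b, rfl | rfl⟩
      · omega
      · ring_nf at h; omega
      · ring_nf at h; omega
      · omega
    have p5 : Prime (5 : ℤ) := by norm_num
    have p3 : Prime (3 : ℤ) := by norm_num
    have a5 : IsCoprime (c ^ 4 + 10 * s * c ^ 2 * d ^ 2 + 5 * d ^ 4) 5 := by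
      refine ((p5.coprime_iff_not_dvd).2 ?_).symm
      rintro ⟨z, hz⟩
      exact h5 (p5.dvd_of_dvd_pow (n := 4)
        ⟨z - 2 * s * c ^ 2 * d ^ 2 - d ^ 4, by linear_combination hz⟩)
    have a3 : IsCoprime (c ^ 4 + 10 * s * c ^ 2 * d ^ 2 + 5 * d ^ 4) 3 := by
      refine ((p3.coprime_iff_not_dvd).2 ?_).symm
      intro h
      have key : ∀ c d s : ZMod 3, (s = 1 ∨ s = -1) → c ^ 4 + 10 * s * c ^ 2 * d ^ 2 + 5 * d ^ 4 = 0 →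
        c = 0 ∧ d = 0 := by decide
      have h' : (((c ^ 4 + 10 * s * c ^ 2 * d ^ 2 + 5 * d ^ 4 : ℤ)) : ZMod 3) = 0 :=
        (ZMod.intCast_zmod_eq_zero_iff_dvd _ 3).2 h
      push_cast at h'
      obtain ⟨hc, hd⟩ := key c d s (by rcases hs with rfl | rfl <;> simp) h'
      have hc := (ZMod.intCast_zmod_eq_zero_iff_dvd _ 3).1 hc
      have hd := (ZMod.intCast_zmod_eq_zero_iff_dvd _ 3).1 hd
      exact p3.not_isUnit (hcd.isUnit_of_dvd' hc hd)
    have := (a2.mul_right a3).mul_right a5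
    norm_num at this
    exact this

theorem step (x D t k w : ℤ) (j : ℕ) (hx2 : ¬ (2 : ℤ) ∣ x) (hx5 : ¬ (5 : ℤ) ∣ x) (hD0 : D ≠ 0)
    (hD5 : (5 : ℤ) ∣ D) (hcop : IsCoprime x D) (h : x ^ 2 - 20 * D ^ 4 = t ^ 5) (hk : k ∣ 30 ^ j)
    (hkD : k * D = w ^ 5) :
    ∃ (c d t' k' w' : ℤ) (j' : ℕ), IsCoprime c d ∧ ¬ (2 : ℤ) ∣ c ∧ (2 : ℤ) ∣ d ∧ ¬ (5 : ℤ) ∣ c ∧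
      (5 : ℤ) ∣ d ∧ d ≠ 0 ∧ d.natAbs < D.natAbs ∧ c ^ 4 + 10 * c ^ 2 * d ^ 2 + 5 * d ^ 4 = t' ^ 5 ∧
      k' ∣ 30 ^ j' ∧ k' * d = w' ^ 5 := by
  have p5 : Prime (5 : ℤ) := by norm_num
  have hxy : IsCoprime x (2 * D ^ 2) :=
    IsCoprime.mul_right ((Int.prime_two.coprime_iff_not_dvd).2 hx2).symm hcop.pow_right
  obtain ⟨c, d, e1, e2⟩ := fifth_pos x (2 * D ^ 2) t hxy (by linear_combination h) hx2 hx5 ⟨_, rfl⟩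
    (by obtain ⟨z, rfl⟩ := hD5; exact ⟨10 * z ^ 2, by ring⟩)
  have hcd : IsCoprime c d := by
    rw [e1, e2] at hxy
    exact (hxy.of_mul_left_left).of_isCoprime_of_dvd_right ⟨5 * (c ^ 4 + 10 * c ^ 2 * d ^ 2 + 5 * d ^ 4), by ring⟩
  have hc2 : ¬ (2 : ℤ) ∣ c := fun hc => hx2 (by rw [e1]; exact hc.mul_right _)
  have hc5 : ¬ (5 : ℤ) ∣ c := fun hc => hx5 (by rw [e1]; exact hc.mul_right _)
  have hd2 : (2 : ℤ) ∣ d := by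
    by_contra hd
    apply hx2
    rw [e1]
    obtain ⟨a, rfl⟩ : ∃ a, c = 2 * a + 1 := ⟨c / 2, by omega⟩
    obtain ⟨b, rfl⟩ : ∃ a, d = 2 * a + 1 := ⟨d / 2, by omega⟩
    ring_nf; omega
  obtain ⟨q1, q2⟩ := quartic_cop c d 1 (by simp) hcd (by omega) hc5
  simp only [mul_one] at q1 q2
  have hd0 : d ≠ 0 := by
    rintro rfl
    apply hD0
    have : D ^ 2 = 0 := by linarith
    exact pow_eq_zero_iff (two_ne_zero) |>.1 this
  have hd5 : (5 : ℤ) ∣ d := by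
    obtain ⟨z, rfl⟩ := hD5
    have h5 : (5 : ℤ) ∣ d * (c ^ 4 + 10 * c ^ 2 * d ^ 2 + 5 * d ^ 4) := ⟨2 * z ^ 2, by linarith⟩
    rcases p5.dvd_or_dvd h5 with h5 | ⟨y, hy⟩
    · exact h5
    · exfalso
      exact hc5 (p5.dvd_of_dvd_pow (n := 4) ⟨y - 2 * c ^ 2 * d ^ 2 - d ^ 4, by linear_combination hy⟩)
  have hk' : 80 * k ^ 2 ∣ (30 : ℤ) ^ (4 + 2 * j) := by
    rw [pow_add, mul_comm 2 j, pow_mul]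
    exact mul_dvd_mul (by norm_num) (pow_dvd_pow_of_dvd hk 2)
  have hcopk : IsCoprime (80 * k ^ 2 * d) (c ^ 4 + 10 * c ^ 2 * d ^ 2 + 5 * d ^ 4) := by
    refine IsCoprime.mul_left ?_ q1.symm
    exact ((q2.pow_right (n := 4 + 2 * j)).of_isCoprime_of_dvd_right hk').symm
  obtain ⟨⟨w', hw'⟩, ⟨t', ht'⟩⟩ := Int.eq_pow_of_mul_eq_pow_odd hcopk (by decide : Odd 5)
    (c := 2 * w ^ 2) (by
      have : (k * D) ^ 2 = (w ^ 5) ^ 2 := by rw [hkD]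
      linear_combination 32 * this - 16 * k ^ 2 * e2)
  refine ⟨c, d, t', 80 * k ^ 2, w', 4 + 2 * j, hcd, hc2, hd2, hc5, hd5, hd0, ?_, ht', hk', hw'⟩
  by_contra hlt
  push Not at hlt
  have habs : |D| ≤ |d| := by
    rw [Int.abs_eq_natAbs, Int.abs_eq_natAbs]; exact_mod_cast hlt
  have hDp : 0 < |D| := abs_pos.2 hD0
  have hq : 5 * |d| ^ 4 ≤ c ^ 4 + 10 * c ^ 2 * d ^ 2 + 5 * d ^ 4 := by
    have : |d| ^ 4 = d ^ 4 := Even.pow_abs (by decide) d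
    rw [this]
    nlinarith [sq_nonneg (c * d), sq_nonneg (c ^ 2)]
  have he : 2 * |D| ^ 2 = 5 * |d| * (c ^ 4 + 10 * c ^ 2 * d ^ 2 + 5 * d ^ 4) := by
    have hqp : 0 ≤ c ^ 4 + 10 * c ^ 2 * d ^ 2 + 5 * d ^ 4 := by positivity
    have := congrArg abs e2
    rw [abs_mul, abs_mul, abs_mul, abs_of_nonneg hqp, abs_pow] at this
    simpa using this
  have hd1 : 1 ≤ |d| := by linarith
  have h2 : |D| ^ 2 ≤ |d| ^ 2 := by gcongr
  have h3 : |d| ^ 2 ≤ |d| ^ 5 := pow_le_pow_right₀ hd1 (by norm_num)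
  have h4 : 5 * |d| * (5 * |d| ^ 4) ≤ 2 * |D| ^ 2 := by rw [he]; gcongr
  have h5 : 0 < |d| ^ 2 := by positivity
  nlinarith

theorem descent : ∀ (N : ℕ) (c d t k w : ℤ) (j : ℕ), d.natAbs = N → IsCoprime c d → ¬ (2 : ℤ) ∣ c →
    (2 : ℤ) ∣ d → ¬ (5 : ℤ) ∣ c → (5 : ℤ) ∣ d → d ≠ 0 →
    c ^ 4 + 10 * c ^ 2 * d ^ 2 + 5 * d ^ 4 = t ^ 5 → k ∣ 30 ^ j → k * d = w ^ 5 → False := by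
  intro N
  induction N using Nat.strong_induction_on with
  | _ N ih =>
  intro c d t k w j hN hcd hc2 hd2 hc5 hd5 hd0 hQ hk hkd
  have p5 : Prime (5 : ℤ) := by norm_num
  obtain ⟨c', d', t', k', w', j', h1, h2, h3, h4, h5, h6, h7, h8, h9, h10⟩ :=
    step (c ^ 2 + 5 * d ^ 2) d t k w j
      (by
        intro h
        obtain ⟨b, rfl⟩ := hd2
        obtain ⟨z, hz⟩ := h
        exact hc2 (Int.prime_two.dvd_of_dvd_pow (n := 2) ⟨z - 10 * b ^ 2, by linear_combination hz⟩))
      (by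
        rintro ⟨z, hz⟩
        exact hc5 (p5.dvd_of_dvd_pow (n := 2) ⟨z - d ^ 2, by linear_combination hz⟩))
      hd0 hd5
      (by
        have := (hcd.pow_left (m := 2)).add_mul_left_left (5 * d)
        rwa [show c ^ 2 + d * (5 * d) = c ^ 2 + 5 * d ^ 2 by ring] at this)
      (by linear_combination hQ) hk hkd
  exact ih d'.natAbs (by omega) c' d' t' k' w' j' rfl h1 h2 h3 h4 h5 h6 h8 h9 h10

theorem int_case (a b e : ℤ) (he : e ≠ 0) (hbe : IsCoprime b e)
    (h : b ^ 2 + 5 * (3375 * e ^ 5) ^ 2 = a ^ 5) : False := by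
  have p5 : Prime (5 : ℤ) := by norm_num
  have p3 : Prime (3 : ℤ) := by norm_num
  have ha2 : ¬ (2 : ℤ) ∣ a := by
    rintro ⟨z, rfl⟩
    have h' : b ^ 2 + 5 * (3375 * e ^ 5) ^ 2 = 32 * z ^ 5 := by linear_combination h
    generalize z ^ 5 = Z at h'
    rcases Int.even_or_odd' b with ⟨b, rfl | rfl⟩ <;> rcases Int.even_or_odd' e with ⟨f, rfl | rfl⟩
    · exact Int.prime_two.not_isUnit (hbe.isUnit_of_dvd' ⟨_, rfl⟩ ⟨_, rfl⟩)
    · ring_nf at h'; omega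
    · ring_nf at h'; omega
    · obtain ⟨p, hp⟩ : Even (b * (b + 1)) := Int.even_mul_succ_self b
      obtain ⟨q, hq⟩ : ∃ q, (2 * f + 1) ^ 5 = 2 * q + 1 := ⟨16 * f ^ 5 + 40 * f ^ 4 + 40 * f ^ 3 + 20 * f ^ 2 + 5 * f, by ring⟩
      obtain ⟨r, hr⟩ : Even (q * (q + 1)) := Int.even_mul_succ_self q
      rw [hq] at h'
      have : 8 * p + 1 + 56953125 * (8 * r + 1) = 32 * Z := by
        linear_combination h' - 4 * hp - 56953125 * 4 * hr
      omega
  have hb5 : ¬ (5 : ℤ) ∣ b := by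
    rintro ⟨b1, rfl⟩
    have : (5 : ℤ) ∣ a := p5.dvd_of_dvd_pow (n := 5)
      ⟨5 * b1 ^ 2 + (3375 * e ^ 5) ^ 2, by linear_combination -h⟩
    obtain ⟨a1, rfl⟩ := this
    have : (5 : ℤ) ∣ b1 := p5.dvd_of_dvd_pow (n := 2)
      ⟨25 * a1 ^ 5 - 455625 * e ^ 10, by linarith⟩
    obtain ⟨b2, rfl⟩ := this
    have : (5 : ℤ) ∣ b2 := p5.dvd_of_dvd_pow (n := 2)
      ⟨a1 ^ 5 - 18225 * e ^ 10, by linarith⟩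
    obtain ⟨b3, rfl⟩ := this
    have : (5 : ℤ) ∣ a1 := p5.dvd_of_dvd_pow (n := 5)
      ⟨b3 ^ 2 + 3645 * e ^ 10, by linarith⟩
    obtain ⟨a2, rfl⟩ := this
    have : (5 : ℤ) ∣ b3 := p5.dvd_of_dvd_pow (n := 2)
      ⟨125 * a2 ^ 5 - 729 * e ^ 10, by linarith⟩
    obtain ⟨b4, rfl⟩ := this
    have : (5 : ℤ) ∣ 729 * e ^ 10 :=
      ⟨25 * a2 ^ 5 - b4 ^ 2, by linarith⟩
    have : (5 : ℤ) ∣ e := p5.dvd_of_dvd_pow (n := 10) (by omega)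
    exact p5.not_isUnit (hbe.isUnit_of_dvd' ⟨_, rfl⟩ this)
  have ha5 : ¬ (5 : ℤ) ∣ a := by
    rintro ⟨z, rfl⟩
    exact hb5 (p5.dvd_of_dvd_pow (n := 2) ⟨625 * z ^ 5 - (3375 * e ^ 5) ^ 2, by linear_combination h⟩)
  by_cases hb3 : (3 : ℤ) ∣ b
  · have he3 : ¬ (3 : ℤ) ∣ e := fun h => p3.not_isUnit (hbe.isUnit_of_dvd' hb3 h)
    obtain ⟨b1, rfl⟩ := hb3
    have : (3 : ℤ) ∣ a := p3.dvd_of_dvd_pow (n := 5)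
      ⟨3 * b1 ^ 2 + 5 * 3 * (1125 * e ^ 5) ^ 2, by linear_combination -h⟩
    obtain ⟨a1, rfl⟩ := this
    have : (3 : ℤ) ∣ b1 := p3.dvd_of_dvd_pow (n := 2)
      ⟨9 * a1 ^ 5 - 5 * 3 * (375 * e ^ 5) ^ 2, by linarith⟩
    obtain ⟨b2, rfl⟩ := this
    have : (3 : ℤ) ∣ b2 := p3.dvd_of_dvd_pow (n := 2)
      ⟨a1 ^ 5 - 5 * 3 * (125 * e ^ 5) ^ 2, by linarith⟩
    obtain ⟨b3, rfl⟩ := this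
    have : (3 : ℤ) ∣ a1 := p3.dvd_of_dvd_pow (n := 5)
      ⟨b3 ^ 2 + 5 * (125 * e ^ 5) ^ 2, by linarith⟩
    obtain ⟨a2, rfl⟩ := this
    have h' : b3 ^ 2 + 5 * (125 * e ^ 5) ^ 2 = 81 * a2 ^ 5 := by linarith
    have hb3e : IsCoprime b3 e := hbe.of_isCoprime_of_dvd_left ⟨27, by ring⟩
    have hb35 : ¬ (5 : ℤ) ∣ b3 := fun h => hb5 (by omega)
    have ha22 : ¬ (2 : ℤ) ∣ 9 * a2 := by omega
    have ha25 : ¬ (5 : ℤ) ∣ 9 * a2 := by omega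
    have fin : ∀ B : ℤ, IsCoprime B e → ¬ (5 : ℤ) ∣ B → B ^ 2 + 5 * (125 * e ^ 5) ^ 2 = 81 * a2 ^ 5 →
        (3 : ℤ) ∣ B - e → False := by
      intro B hBe hB5 hB hB3
      have hcop : IsCoprime (-22 * B - 35 * (125 * e ^ 5)) (7 * B - 22 * (125 * e ^ 5)) := by
        rw [← isRelPrime_iff_isCoprime]
        have hBe' : IsCoprime B (125 * e ^ 5) := by
          refine IsCoprime.mul_right ?_ hBe.pow_right
          have := ((p5.coprime_iff_not_dvd).2 hB5).symm.pow_right (n := 3)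
          norm_num at this
          exact this
        have h3 : IsCoprime (729 : ℤ) (7 * B - 22 * (125 * e ^ 5)) := by
          have : IsCoprime (3 : ℤ) (7 * B - 22 * (125 * e ^ 5)) := by
            refine (p3.coprime_iff_not_dvd).2 ?_
            intro hd
            have key : ∀ B e : ZMod 3, B - e = 0 → 7 * B - 22 * (125 * e ^ 5) = 0 → e = 0 := by decide
            have k1 := (ZMod.intCast_zmod_eq_zero_iff_dvd _ 3).2 hd
            have k2 := (ZMod.intCast_zmod_eq_zero_iff_dvd _ 3).2 hB3
            push_cast at k1 k2
            exact he3 ((ZMod.intCast_zmod_eq_zero_iff_dvd _ 3).1 (key _ _ k2 k1))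
          have := this.pow_left (m := 6)
          norm_num at this ⊢
          exact this
        intro z hz1 hz2
        have z3 : IsCoprime (729 : ℤ) z := h3.of_isCoprime_of_dvd_right hz2
        refine hBe'.isUnit_of_dvd' ?_ ?_
        · apply z3.symm.dvd_of_dvd_mul_left
          obtain ⟨p, hp⟩ := hz1
          obtain ⟨q, hq⟩ := hz2
          exact ⟨-22 * p + 35 * q, by linear_combination -22 * hp + 35 * hq⟩
        · apply z3.symm.dvd_of_dvd_mul_left
          obtain ⟨p, hp⟩ := hz1
          obtain ⟨q, hq⟩ := hz2
          exact ⟨-7 * p - 22 * q, by linear_combination -7 * hp - 22 * hq⟩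
      obtain ⟨u, v, -, e2⟩ := fifth_neg _ _ (9 * a2) hcop (by linear_combination 729 * hB) ha22 ha25
      apply hB5
      have : (5 : ℤ) ∣ 7 * B := ⟨22 * (25 * e ^ 5) + v * (u ^ 4 - 10 * u ^ 2 * v ^ 2 + 5 * v ^ 4),
        by linear_combination e2⟩
      omega
    have hor : (3 : ℤ) ∣ b3 - e ∨ (3 : ℤ) ∣ -b3 - e := by
      have key : ∀ B e f : ZMod 3, B ^ 2 + 5 * (125 * e ^ 5) ^ 2 = 81 * f → B - e = 0 ∨ -B - e = 0 := by decide
      have k1 := congrArg (Int.cast : ℤ → ZMod 3) h'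
      push_cast at k1
      rcases key _ _ _ k1 with k | k
      · left; exact (ZMod.intCast_zmod_eq_zero_iff_dvd _ 3).1 (by push_cast; exact k)
      · right; exact (ZMod.intCast_zmod_eq_zero_iff_dvd _ 3).1 (by push_cast; exact k)
    rcases hor with k | k
    · exact fin b3 hb3e hb35 h' k
    · exact fin (-b3) hb3e.neg_left (by simpa using hb35) (by linear_combination h') k
  · have hcop : IsCoprime b (3375 * e ^ 5) := by
      refine IsCoprime.mul_right ?_ hbe.pow_right
      have h5 := ((p5.coprime_iff_not_dvd).2 hb5).symm.pow_right (n := 3)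
      have h3 := ((p3.coprime_iff_not_dvd).2 hb3).symm.pow_right (n := 3)
      have := h5.mul_right h3
      norm_num at this
      exact this
    obtain ⟨u, v, e1, e2⟩ := fifth_neg b _ a hcop h ha2 ha5
    have e2' : 675 * e ^ 5 = v * (u ^ 4 - 10 * u ^ 2 * v ^ 2 + 5 * v ^ 4) := by linarith
    have huv : IsCoprime u v := by
      rw [e1, e2] at hcop
      refine (hcop.of_isCoprime_of_dvd_left ⟨u ^ 4 - 50 * u ^ 2 * v ^ 2 + 125 * v ^ 4, by ring⟩).of_isCoprime_of_dvd_right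
        ⟨5 * (u ^ 4 - 10 * u ^ 2 * v ^ 2 + 5 * v ^ 4), by ring⟩
    have hu5 : ¬ (5 : ℤ) ∣ u := by
      rintro ⟨z, rfl⟩
      exact hb5 ⟨625 * z ^ 5 - 1250 * z ^ 3 * v ^ 2 + 125 * z * v ^ 4, by rw [e1]; ring⟩
    have huv2 : ¬ (2 : ℤ) ∣ u + v := by
      rintro ⟨z, hz⟩
      obtain rfl : u = 2 * z - v := by linarith
      apply ha2
      have : (2 : ℤ) ∣ a ^ 5 := by
        rw [← h, e1, e2]
        have : ((2 * z - v) ^ 5 - 50 * (2 * z - v) ^ 3 * v ^ 2 + 125 * (2 * z - v) * v ^ 4) ^ 2 +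
            5 * (5 * v * ((2 * z - v) ^ 4 - 10 * (2 * z - v) ^ 2 * v ^ 2 + 5 * v ^ 4)) ^ 2 =
            ((2 * z - v) ^ 2 + 5 * v ^ 2) ^ 5 := by ring
        rw [this]
        refine dvd_pow ?_ (by norm_num)
        exact ⟨2 * z ^ 2 - 2 * z * v + 3 * v ^ 2, by ring⟩
      exact Int.prime_two.dvd_of_dvd_pow this
    obtain ⟨q1, q2⟩ := quartic_cop u v (-1) (by simp) huv huv2 hu5
    have eR : u ^ 4 + 10 * (-1) * u ^ 2 * v ^ 2 + 5 * v ^ 4 = u ^ 4 - 10 * u ^ 2 * v ^ 2 + 5 * v ^ 4 := by ring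
    rw [eR] at q1 q2
    have hk : (1125 : ℤ) ∣ 30 ^ 3 := by norm_num
    have hcopk : IsCoprime (1125 * v) (u ^ 4 - 10 * u ^ 2 * v ^ 2 + 5 * v ^ 4) :=
      IsCoprime.mul_left ((q2.pow_right (n := 3)).of_isCoprime_of_dvd_right hk).symm q1.symm
    obtain ⟨⟨w, hw⟩, ⟨t, ht⟩⟩ := Int.eq_pow_of_mul_eq_pow_odd hcopk (by decide : Odd 5)
      (c := 15 * e) (by linear_combination -1125 * e2')
    have hv0 : v ≠ 0 := by
      rintro rfl
      apply he
      have : e ^ 5 = 0 := by linarith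
      exact pow_eq_zero_iff (by norm_num) |>.1 this
    have hv5 : (5 : ℤ) ∣ v := by
      have h5 : (5 : ℤ) ∣ v * (u ^ 4 - 10 * u ^ 2 * v ^ 2 + 5 * v ^ 4) := ⟨135 * e ^ 5, by linarith⟩
      rcases p5.dvd_or_dvd h5 with h5 | ⟨y, hy⟩
      · exact h5
      · exfalso
        exact hu5 (p5.dvd_of_dvd_pow (n := 4) ⟨y + 2 * u ^ 2 * v ^ 2 - v ^ 4, by linear_combination hy⟩)
    obtain ⟨c', d', t', k', w', j', h1, h2, h3, h4, h5, h6, h7, h8, h9, h10⟩ :=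
      step (u ^ 2 - 5 * v ^ 2) v t 1125 w 3
        (by
          rintro ⟨z, hz⟩
          have : (2 : ℤ) ∣ (u + v) ^ 2 := ⟨z + 3 * v ^ 2 + u * v, by linear_combination hz⟩
          exact huv2 (Int.prime_two.dvd_of_dvd_pow this))
        (by
          rintro ⟨z, hz⟩
          exact hu5 (p5.dvd_of_dvd_pow (n := 2) ⟨z + v ^ 2, by linear_combination hz⟩))
        hv0 hv5
        (by
          have := (huv.pow_left (m := 2)).add_mul_left_left (-5 * v)
          rwa [show u ^ 2 + v * (-5 * v) = u ^ 2 - 5 * v ^ 2 by ring] at this)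
        (by linear_combination ht) hk hw
    exact descent _ c' d' t' k' w' j' rfl h1 h2 h3 h4 h5 h6 h8 h9 h10

theorem no_rational_points_case2 (X Y : ℚ) :
    Y ^ 2 ≠ X ^ 5 - 3 ^ 6 * 5 ^ 7 := by
  intro h
  have hd : Y.den ^ 2 = X.den ^ 5 := by
    have := congrArg Rat.den h
    rw [Rat.den_pow, show (3 : ℚ) ^ 6 * 5 ^ 7 = ((56953125 : ℕ) : ℚ) by norm_num,
      Rat.sub_natCast_den, Rat.den_pow] at this
    exact this
  obtain ⟨e, he⟩ : X.den ^ 2 ∣ Y.den := by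
    rw [← Nat.pow_dvd_pow_iff (two_ne_zero), hd]
    exact ⟨X.den, by ring⟩
  have hX0 : X.den ≠ 0 := X.den_nz
  have hXe : X.den = e ^ 2 := by
    rw [he] at hd
    have h4 : X.den ^ 4 ≠ 0 := pow_ne_zero _ hX0
    apply Nat.eq_of_mul_eq_mul_left (Nat.pos_of_ne_zero h4)
    linarith
  have hYe : Y.den = e ^ 5 := by rw [he, hXe]; ring
  have he0 : e ≠ 0 := by rintro rfl; simp at hXe
  have heq : (e : ℚ) ≠ 0 := by exact_mod_cast he0
  have hX : X = X.num / (e : ℚ) ^ 2 := by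
    conv_lhs => rw [← Rat.num_div_den X, hXe]
    push_cast; rfl
  have hY : Y = Y.num / (e : ℚ) ^ 5 := by
    conv_lhs => rw [← Rat.num_div_den Y, hYe]
    push_cast; rfl
  apply int_case X.num Y.num e (by exact_mod_cast he0)
  · have := Y.isCoprime_num_den
    rw [hYe] at this
    push_cast at this
    exact (IsCoprime.pow_right_iff (by norm_num)).1 this
  · rw [hX, hY] at h
    have h' : (Y.num : ℚ) ^ 2 + 5 * (3375 * (e : ℚ) ^ 5) ^ 2 = (X.num : ℚ) ^ 5 := by
      field_simp at h
      linear_combination h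
    exact_mod_cast h'
end

section
/- The equation Y² = 3³X⁵ − 2⁴·5⁷ (that is, Y² = 27X⁵ − 1250000) has no rational solutions (X, Y) ∈ ℚ × ℚ. -/
theorem round_ex (m a : ℤ) (hm : 0 < m) : ∃ k : ℤ, 2 * |a - m * k| ≤ m := by
  refine ⟨(2 * a + m) / (2 * m), ?_⟩
  have h1 := Int.emod_add_mul_ediv (2 * a + m) (2 * m)
  have h2 := Int.emod_nonneg (2 * a + m) (show 2 * m ≠ 0 by omega)
  have h3 := Int.emod_lt_of_pos (2 * a + m) (show 0 < 2 * m by omega)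
  set k := (2 * a + m) / (2 * m)
  have : 2 * |a - m * k| = |2 * (a - m * k)| := by rw [abs_mul]; simp
  rw [this, abs_le]
  constructor <;> nlinarith

theorem round_ex' (n a : ℤ) (hn : n ≠ 0) : ∃ k : ℤ, 2 * |a - n * k| ≤ |n| := by
  obtain ⟨k, hk⟩ := round_ex |n| a (abs_pos.2 hn)
  rcases abs_choice n with h | h
  · exact ⟨k, by rw [h] at hk ⊢; exact hk⟩
  · exact ⟨-k, by rw [h] at hk ⊢; convert hk using 4; ring⟩

theorem euclid_int (d : ℤ) (hd : d = 5 ∨ d = -5) (n a b : ℤ) (hn : n ≠ 0) :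
    ∃ c k l : ℤ, (c = 1 ∨ c = 2) ∧
      |(c * a - n * k) ^ 2 - d * (c * b - n * l) ^ 2| < n ^ 2 := by
  obtain ⟨k, hk⟩ := round_ex' n a hn
  obtain ⟨l, hl⟩ := round_ex' n b hn
  by_cases h : |(1 * a - n * k) ^ 2 - d * (1 * b - n * l) ^ 2| < n ^ 2
  · exact ⟨1, k, l, Or.inl rfl, h⟩
  obtain ⟨k', hk'⟩ := round_ex' n (2 * a) hn
  rw [one_mul, one_mul, ← sq_abs n, ← sq_abs (a - n * k), ← sq_abs (b - n * l)] at h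
  have hp := abs_pos.2 hn
  set m := |n| with hm
  set x := |a - n * k| with hx
  have hx0 : 0 ≤ x := abs_nonneg _
  have hy0 : 0 ≤ |b - n * l| := abs_nonneg _
  -- y large
  have hy : 3 * m ≤ 8 * |b - n * l| := by
    by_contra hlt
    push Not at hlt
    apply h
    rw [abs_lt]
    rcases hd with rfl | rfl <;> constructor <;> nlinarith
  obtain ⟨l', hl'⟩ : ∃ l' : ℤ, 4 * |2 * b - n * l'| ≤ m := by
    rcases abs_choice (b - n * l) with h1 | h1 <;> rcases abs_choice n with h2 | h2
    · refine ⟨2 * l + 1, ?_⟩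
      rw [h1] at hy hl
      rw [show 2 * b - n * (2 * l + 1) = 2 * (b - n * l) - m by linear_combination h2]
      have : |2 * (b - n * l) - m| ≤ m / 4 := by rw [abs_le]; constructor <;> omega
      omega
    · refine ⟨2 * l - 1, ?_⟩
      rw [h1] at hy hl
      rw [show 2 * b - n * (2 * l - 1) = 2 * (b - n * l) - m by linear_combination h2]
      have : |2 * (b - n * l) - m| ≤ m / 4 := by rw [abs_le]; constructor <;> omega
      omega
    · refine ⟨2 * l - 1, ?_⟩
      rw [h1] at hy hl
      rw [show 2 * b - n * (2 * l - 1) = 2 * (b - n * l) + m by linear_combination -h2]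
      have : |2 * (b - n * l) + m| ≤ m / 4 := by rw [abs_le]; constructor <;> omega
      omega
    · refine ⟨2 * l + 1, ?_⟩
      rw [h1] at hy hl
      rw [show 2 * b - n * (2 * l + 1) = 2 * (b - n * l) + m by linear_combination -h2]
      have : |2 * (b - n * l) + m| ≤ m / 4 := by rw [abs_le]; constructor <;> omega
      omega
  refine ⟨2, k', l', Or.inr rfl, ?_⟩
  rw [← sq_abs n, ← sq_abs (2 * a - n * k'), ← sq_abs (2 * b - n * l')]
  have hx0' : 0 ≤ |2 * a - n * k'| := abs_nonneg _
  have hy0' : 0 ≤ |2 * b - n * l'| := abs_nonneg _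
  rw [← hm]
  rw [abs_lt]
  rcases hd with rfl | rfl <;> constructor <;> nlinarith

theorem znorm_zero (d : ℤ) (hd : d = 5 ∨ d = -5) (z : ℤ√d) (h : z.norm = 0) : z = 0 := by
  rw [Zsqrtd.norm_def] at h
  have hi : z.im = 0 := by
    rcases hd with rfl | rfl
    · by_contra hne
      have hi : Irrational (√(5:ℕ)) := Nat.Prime.irrational_sqrt (by norm_num)
      apply hi
      refine ⟨|z.re / z.im|, ?_⟩
      rw [eq_comm, Real.sqrt_eq_iff_eq_sq (by positivity) (by positivity)]
      have : (z.re : ℚ) * z.re - 5 * z.im * z.im = 0 := by exact_mod_cast h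
      have h0 : (z.im : ℚ) ≠ 0 := by exact_mod_cast hne
      have : (5 : ℚ) = |(z.re : ℚ) / z.im| ^ 2 := by
        rw [sq_abs]; field_simp; linarith
      exact_mod_cast this
    · nlinarith [mul_self_nonneg z.re, mul_self_nonneg z.im]
  have hr : z.re = 0 := by simpa [hi] using h
  ext <;> simp [hi, hr]

theorem zdom (d : ℤ) (hd : d = 5 ∨ d = -5) : IsDomain (ℤ√d) := by
  have : NoZeroDivisors (ℤ√d) := ⟨by
    intro a b hab
    have := congrArg Zsqrtd.norm hab
    rw [Zsqrtd.norm_mul, Zsqrtd.norm_zero, mul_eq_zero] at this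
    exact this.imp (znorm_zero d hd _) (znorm_zero d hd _)⟩
  exact NoZeroDivisors.to_isDomain _

theorem euclid (d : ℤ) (hd : d = 5 ∨ d = -5) (α β : ℤ√d) (hβ : β ≠ 0) :
    ∃ (c : ℤ) (κ : ℤ√d), (c = 1 ∨ c = 2) ∧ |((c : ℤ√d) * α - β * κ).norm| < |β.norm| := by
  have hn : β.norm ≠ 0 := fun h => hβ (znorm_zero d hd β h)
  obtain ⟨c, k, l, hc, h⟩ := euclid_int d hd β.norm (α * star β).re (α * star β).im hn
  refine ⟨c, ⟨k, l⟩, hc, ?_⟩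
  have key : (((c : ℤ√d) * α - β * ⟨k, l⟩).norm) * β.norm =
     (c * (α * star β).re - β.norm * k) ^ 2 - d * (c * (α * star β).im - β.norm * l) ^ 2 := by
    simp [Zsqrtd.norm_def]
    ring
  have hp := abs_pos.2 hn
  rw [← key, abs_mul, ← sq_abs β.norm, sq] at h
  exact lt_of_mul_lt_mul_right h hp.le

theorem ideal_class (d : ℤ) (hd : d = 5 ∨ d = -5) (I : Ideal (ℤ√d)) (hI : I ≠ ⊥) :
    ∃ β : ℤ√d, β ≠ 0 ∧ (I = Ideal.span {β} ∨
      Ideal.span {2} * I = Ideal.span {β} * Ideal.span {2, ⟨1, 1⟩}) := by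
  have := zdom d hd
  obtain ⟨b0, hb0, hb0'⟩ := Submodule.exists_mem_ne_zero_of_ne_bot hI
  have hex : ∃ n : ℕ, ∃ b ∈ I, b ≠ 0 ∧ b.norm.natAbs = n := ⟨_, b0, hb0, hb0', rfl⟩
  classical
  obtain ⟨β, hβI, hβ, hβn⟩ := Nat.find_spec hex
  have hmin : ∀ x ∈ I, |x.norm| < |β.norm| → x = 0 := by
    intro x hx hlt
    by_contra hne
    refine Nat.find_min hex (m := x.norm.natAbs) ?_ ⟨x, hx, hne, rfl⟩
    rw [← hβn]; zify; exact hlt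
  have hdiv : ∀ α ∈ I, ∃ x, 2 * α = β * x := by
    intro α hα
    obtain ⟨c, κ, hc, h⟩ := euclid d hd α β hβ
    have h0 := hmin _ (I.sub_mem (I.mul_mem_left _ hα) (I.mul_mem_right _ hβI)) h
    rw [sub_eq_zero] at h0
    rcases hc with rfl | rfl
    · refine ⟨2 * κ, ?_⟩
      push_cast at h0
      linear_combination 2 * h0
    · exact ⟨κ, by exact_mod_cast h0⟩
  have h2 : (2 : ℤ√d) ≠ 0 := by
    intro h; have := congrArg Zsqrtd.re h; simp at this
  have hpar : ∀ α ∈ I, ∀ x, 2 * α = β * x → x.re % 2 = x.im % 2 := by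
    intro α hα x hx
    by_contra hne
    have hodd : x.norm % 2 = 1 := by
      rw [Zsqrtd.norm_def, Int.sub_emod, Int.mul_emod, Int.mul_emod (d * x.im), Int.mul_emod d]
      rcases Int.emod_two_eq_zero_or_one x.re with h1 | h1 <;>
      rcases Int.emod_two_eq_zero_or_one x.im with h3 | h3 <;>
      rcases hd with rfl | rfl <;>
      simp [h1, h3] at hne ⊢
    obtain ⟨t, ht⟩ : ∃ t, x.norm = 2 * t + 1 := ⟨x.norm / 2, by omega⟩
    have hxn : x * star x = 2 * (t : ℤ√d) + 1 := by
      rw [← Zsqrtd.norm_eq_mul_conj, ht]; push_cast; ring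
    set γ := α * star x - β * t with hγ
    have h2γ : β = 2 * γ := by
      rw [hγ]; linear_combination star x * (-hx) - β * hxn
    have hγI : γ ∈ I := I.sub_mem (I.mul_mem_right _ hα) (I.mul_mem_right _ hβI)
    have hγ0 : γ ≠ 0 := by rintro h; rw [h] at h2γ; simp at h2γ; exact hβ h2γ
    apply hγ0
    apply hmin _ hγI
    rw [h2γ, Zsqrtd.norm_mul, abs_mul]
    have : |γ.norm| > 0 := abs_pos.2 fun h => hγ0 (znorm_zero d hd _ h)
    have h4 : (2 : ℤ√d).norm = 4 := by simp [Zsqrtd.norm_def]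
    rw [h4]; norm_num; linarith
  refine ⟨β, hβ, ?_⟩
  by_cases hall : ∀ α ∈ I, β ∣ α
  · left
    apply le_antisymm
    · intro α hα; exact Ideal.mem_span_singleton.2 (hall α hα)
    · rw [Ideal.span_singleton_le_iff_mem]; exact hβI
  · right
    push Not at hall
    obtain ⟨α, hα, hnd⟩ := hall
    obtain ⟨x, hx⟩ := hdiv α hα
    have hxp := hpar α hα x hx
    have hx1 : x.re % 2 = 1 := by
      by_contra h
      apply hnd
      refine ⟨⟨x.re / 2, x.im / 2⟩, ?_⟩
      apply mul_left_cancel₀ h2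
      rw [hx]
      have : x = 2 * ⟨x.re / 2, x.im / 2⟩ := by
        ext <;> simp <;> omega
      conv_lhs => rw [this]
      ring
    have memP : ∀ y : ℤ√d, y.re % 2 = y.im % 2 → y ∈ Ideal.span {(2 : ℤ√d), ⟨1, 1⟩} := by
      intro y hy
      rw [Ideal.mem_span_pair]
      refine ⟨⟨(y.re - y.im) / 2, 0⟩, ⟨y.im, 0⟩, ?_⟩
      ext <;> simp <;> omega
    apply le_antisymm
    · rw [Ideal.span_singleton_mul_le_span_singleton_mul]
      intro a ha
      obtain ⟨y, hy⟩ := hdiv a ha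
      exact ⟨y, memP y (hpar a ha y hy), hy⟩
    · rw [Ideal.span_singleton_mul_le_span_singleton_mul]
      intro y hy
      rw [Ideal.mem_span_pair] at hy
      obtain ⟨s, t, rfl⟩ := hy
      have hz : ∃ w : ℤ√d, (⟨1, 1⟩ : ℤ√d) = x + 2 * w :=
        ⟨⟨(1 - x.re) / 2, (1 - x.im) / 2⟩, by ext <;> simp <;> omega⟩
      obtain ⟨w, hw⟩ := hz
      refine ⟨s * β + t * (α + w * β), ?_, ?_⟩
      · exact I.add_mem (I.mul_mem_left _ hβI) (I.mul_mem_left _ (I.add_mem hα (I.mul_mem_left _ hβI)))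
      · rw [hw]; linear_combination -t * hx

theorem ideal_pow5 {R : Type*} [CommRing R] (z z' n : R) (h : z * z' = n ^ 5)
    (hc : IsCoprime z z') : Ideal.span {z, n} ^ 5 = Ideal.span {z} := by
  apply le_antisymm
  · conv_rhs => rw [← Ideal.mk_ker (I := Ideal.span {z})]
    rw [← Ideal.map_eq_bot_iff_le_ker, Ideal.map_pow, Ideal.map_span, Set.image_pair]
    have h0 : Ideal.Quotient.mk (Ideal.span {z}) z = 0 :=
      Ideal.Quotient.eq_zero_iff_mem.2 (Ideal.mem_span_singleton_self z)
    rw [h0, Ideal.span_insert_zero, Ideal.span_singleton_pow, ← map_pow, ← h, map_mul, h0]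
    simp
  · rw [Ideal.span_singleton_le_iff_mem]
    obtain ⟨a, b, hab⟩ := hc.pow_left (m := 4)
    have h1 : z ^ 5 ∈ Ideal.span {z, n} ^ 5 := Ideal.pow_mem_pow (Ideal.subset_span (by simp)) 5
    have h2 : n ^ 5 ∈ Ideal.span {z, n} ^ 5 := Ideal.pow_mem_pow (Ideal.subset_span (by simp)) 5
    have : z = a * z ^ 5 + b * n ^ 5 := by linear_combination (-z) * hab + b * h
    have h3 := Ideal.add_mem _ (Ideal.mul_mem_left _ a h1) (Ideal.mul_mem_left _ b h2)
    rwa [← this] at h3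

theorem P_neg : Ideal.span {(2 : ℤ√(-5)), ⟨1, 1⟩} * Ideal.span {(2 : ℤ√(-5)), ⟨1, 1⟩} =
    Ideal.span {2} := by
  apply le_antisymm
  · rw [Ideal.span_pair_mul_span_pair, Ideal.span_le]
    have : (⟨1, 1⟩ : ℤ√(-5)) * ⟨1, 1⟩ = 2 * ⟨-2, 1⟩ := by ext <;> simp
    rintro x (rfl | rfl | rfl | rfl)
    · exact Ideal.mem_span_singleton.2 ⟨_, rfl⟩
    · exact Ideal.mem_span_singleton.2 ⟨_, rfl⟩
    · exact Ideal.mem_span_singleton.2 ⟨_, mul_comm _ _⟩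
    · exact Ideal.mem_span_singleton.2 ⟨_, this⟩
  · rw [Ideal.span_singleton_le_iff_mem]
    have h1 : (2 : ℤ√(-5)) ∈ Ideal.span {(2 : ℤ√(-5)), ⟨1, 1⟩} := Ideal.subset_span (by simp)
    have h2 : (⟨1, 1⟩ : ℤ√(-5)) ∈ Ideal.span {(2 : ℤ√(-5)), ⟨1, 1⟩} := Ideal.subset_span (by simp)
    have := Ideal.sub_mem _ (Ideal.sub_mem _ (Ideal.mul_mem_mul h1 h2) (Ideal.mul_mem_mul h2 h2))
      (Ideal.mul_mem_mul h1 h1)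
    convert this using 1
    ext <;> simp

theorem P_pos : Ideal.span {(2 : ℤ√5), ⟨1, 1⟩} * Ideal.span {(2 : ℤ√5), ⟨1, 1⟩} =
    Ideal.span {2} * Ideal.span {(2 : ℤ√5), ⟨1, 1⟩} := by
  have h1 : (2 : ℤ√5) ∈ Ideal.span {(2 : ℤ√5), ⟨1, 1⟩} := Ideal.subset_span (by simp)
  have h2 : (⟨1, 1⟩ : ℤ√5) ∈ Ideal.span {(2 : ℤ√5), ⟨1, 1⟩} := Ideal.subset_span (by simp)
  apply le_antisymm
  · have h3 : (⟨1, 1⟩ : ℤ√5) * ⟨1, 1⟩ = 2 * (2 + ⟨1, 1⟩) := by ext <;> simp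
    have h0 : (2 : ℤ√5) ∈ Ideal.span {(2 : ℤ√5)} := Ideal.mem_span_singleton_self _
    rw [Ideal.span_pair_mul_span_pair, Ideal.span_le]
    rintro x (rfl | rfl | rfl | rfl)
    · exact Ideal.mul_mem_mul h0 h1
    · exact Ideal.mul_mem_mul h0 h2
    · have h4 := Ideal.mul_mem_mul h0 h2
      rwa [mul_comm (2 : ℤ√5) ⟨1, 1⟩] at h4
    · rw [h3]; exact Ideal.mul_mem_mul h0 (Ideal.add_mem _ h1 h2)
  · exact Ideal.mul_mono_left ((Ideal.span_singleton_le_iff_mem _).2 h1)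

theorem I_principal (d : ℤ) (hd : d = 5 ∨ d = -5) (I : Ideal (ℤ√d)) (z : ℤ√d) (hz : z ≠ 0)
    (h5 : I ^ 5 = Ideal.span {z}) : ∃ α, I = Ideal.span {α} := by
  have := zdom d hd
  have hI : I ≠ ⊥ := by
    rintro rfl
    rw [Ideal.bot_pow (by norm_num), eq_comm, Ideal.span_singleton_eq_bot] at h5
    exact hz h5
  have h2 : (2 : ℤ√d) ≠ 0 := by
    intro h; have := congrArg Zsqrtd.re h; simp at this
  obtain ⟨β, hβ, h | h⟩ := ideal_class d hd I hI
  · exact ⟨β, h⟩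
  rcases hd with rfl | rfl
  · exfalso
    set P := Ideal.span {(2 : ℤ√5), ⟨1, 1⟩} with hP
    have hPP : P * P = Ideal.span {2} * P := P_pos
    set T : Ideal (ℤ√5) := Ideal.span {2} with hT
    set B := Ideal.span {β} with hB
    set Z := Ideal.span {z} with hZ
    have hcan : ∀ (x : ℤ√5), x ≠ 0 → ∀ J K : Ideal (ℤ√5), Ideal.span {x} * J = Ideal.span {x} * K → J = K :=
      fun x hx J K => (Ideal.span_singleton_mul_right_inj hx).1
    have p2 : P ^ 2 = T * P := by rw [sq, hPP]
    have p3 : P ^ 3 = T ^ 2 * P := by rw [pow_succ, p2, mul_assoc, hPP]; ring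
    have p5 : P ^ 5 = T ^ 4 * P := by
      rw [show P ^ 5 = P ^ 3 * P ^ 2 by ring, p2, p3, show T ^ 2 * P * (T * P) = T ^ 3 * (P * P) by ring, hPP]
      ring
    have e1 : T ^ 5 * Z = T ^ 4 * (B ^ 5 * P) := by
      calc T ^ 5 * Z = (T * I) ^ 5 := by rw [← h5, mul_pow]
        _ = B ^ 5 * P ^ 5 := by rw [h]; ring
        _ = _ := by rw [p5]; ring
    have e2 : T * Z = B ^ 5 * P := by
      apply hcan (2 ^ 4) (pow_ne_zero _ h2)
      rw [← Ideal.span_singleton_pow, ← hT]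
      rw [← e1]; ring
    have e3 : T * Z * (T * Z) = T * Z * (T * B ^ 5) := by
      calc T * Z * (T * Z) = B ^ 10 * (P * P) := by rw [e2]; ring
        _ = (B ^ 5 * P) * (T * B ^ 5) := by rw [hPP]; ring
        _ = _ := by rw [e2]
    have e4 : T * Z = T * B ^ 5 := by
      apply hcan (2 * z) (mul_ne_zero h2 hz)
      rw [← Ideal.span_singleton_mul_span_singleton, ← hT, ← hZ]
      exact e3
    have e5 : T = P := by
      apply hcan (β ^ 5) (pow_ne_zero _ hβ)
      rw [← Ideal.span_singleton_pow, ← hB, ← e2, e4, mul_comm]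
    have : (⟨1, 1⟩ : ℤ√5) ∈ T := by rw [e5]; exact Ideal.subset_span (by simp)
    rw [hT, Ideal.mem_span_singleton] at this
    obtain ⟨c, hc⟩ := this
    have := congrArg Zsqrtd.re hc
    simp at this
    omega
  · have e1 : Ideal.span {β ^ 4} * I = Ideal.span {4 * z} := by
      have e2 : Ideal.span {(2 : ℤ√(-5))} * (Ideal.span {2} * (I * I)) =
          Ideal.span {2} * Ideal.span {β ^ 2} := by
        calc _ = (Ideal.span {(2 : ℤ√(-5))} * I) * (Ideal.span {(2 : ℤ√(-5))} * I) := by ring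
          _ = Ideal.span {β} ^ 2 * (Ideal.span {2, ⟨1, 1⟩} * Ideal.span {2, ⟨1, 1⟩}) := by
            rw [h]; ring
          _ = _ := by rw [P_neg, Ideal.span_singleton_pow, mul_comm]
      have e3 := (Ideal.span_singleton_mul_right_inj h2).1 e2
      calc Ideal.span {β ^ 4} * I = Ideal.span {β ^ 2} ^ 2 * I := by
            rw [Ideal.span_singleton_pow]; congr 3; ring
        _ = Ideal.span {2} ^ 2 * I ^ 5 := by rw [← e3]; ring
        _ = _ := by
          rw [h5, Ideal.span_singleton_pow, Ideal.span_singleton_mul_span_singleton]; norm_num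
    have hm : 4 * z ∈ Ideal.span {β ^ 4} * I := by rw [e1]; exact Ideal.mem_span_singleton_self _
    rw [Ideal.mem_span_singleton_mul] at hm
    obtain ⟨α, hα, hα'⟩ := hm
    refine ⟨α, ?_⟩
    apply (Ideal.span_singleton_mul_right_inj (pow_ne_zero 4 hβ)).1
    rw [e1, Ideal.span_singleton_mul_span_singleton, hα']

theorem fifth_unit (d : ℤ) (hd : d = 5 ∨ d = -5) (x y n : ℤ) (hc : IsCoprime x y)
    (h : x ^ 2 - d * y ^ 2 = n ^ 5) (hn : Odd n) (h5 : ¬ (5 : ℤ) ∣ n) :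
    ∃ α ε : ℤ√d, IsUnit ε ∧ (⟨x, y⟩ : ℤ√d) = ε * α ^ 5 := by
  have := zdom d hd
  have hcop : IsCoprime (n ^ 5) (2 * x) := by
    apply IsCoprime.pow_left
    apply IsCoprime.mul_right
    · rw [Int.isCoprime_iff_gcd_eq_one, Int.gcd_comm]
      have := Int.isCoprime_iff_gcd_eq_one.1 (Int.isCoprime_two_left.2 hn)
      exact this
    · rw [Int.isCoprime_iff_gcd_eq_one]
      change Nat.Coprime n.natAbs x.natAbs
      apply Nat.Coprime.symm
      apply Nat.coprime_of_dvd
      intro p hp hpx hpn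
      have hp' : Prime (p : ℤ) := Nat.prime_iff_prime_int.1 hp
      have hpx : (p : ℤ) ∣ x := Int.natCast_dvd.2 hpx
      have hpn : (p : ℤ) ∣ n := Int.natCast_dvd.2 hpn
      have h1 : (p : ℤ) ∣ d * y ^ 2 := by
        have : d * y ^ 2 = x ^ 2 - n ^ 5 := by linarith
        rw [this]
        exact dvd_sub (dvd_pow hpx (by norm_num)) (dvd_pow hpn (by norm_num))
      rcases hp'.dvd_or_dvd h1 with h2 | h2
      · have h3 : (p : ℤ) ∣ 5 := by rcases hd with rfl | rfl; exact h2; exact (Int.dvd_neg).1 h2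
        have : p = 5 := by
          have : p ∣ 5 := by exact_mod_cast h3
          exact (Nat.prime_dvd_prime_iff_eq hp (by norm_num)).1 this
        subst this
        exact h5 (by exact_mod_cast hpn)
      · have h3 := hp'.dvd_of_dvd_pow h2
        exact hp'.not_isUnit (hc.isUnit_of_dvd' hpx h3)
  have hzz : (⟨x, y⟩ : ℤ√d) * ⟨x, -y⟩ = (n : ℤ√d) ^ 5 := by
    rw [← Int.cast_pow, ← h]; ext <;> simp [sq] <;> ring
  have hcz : IsCoprime (⟨x, y⟩ : ℤ√d) ⟨x, -y⟩ := by
    obtain ⟨a, b, hab⟩ := hcop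
    refine ⟨a * ⟨x, -y⟩ + b, b, ?_⟩
    have e1 : (a : ℤ√d) * (n : ℤ√d) ^ 5 + b * (2 * (x : ℤ√d)) = 1 := by exact_mod_cast congrArg (Int.cast (R := ℤ√d)) hab
    have e2 : (⟨x, y⟩ : ℤ√d) + ⟨x, -y⟩ = 2 * x := by ext <;> simp; ring
    linear_combination e1 + a * hzz + b * e2
  have hz : (⟨x, y⟩ : ℤ√d) ≠ 0 := by
    intro h0
    have h1 : x = 0 := congrArg Zsqrtd.re h0
    have h2 : y = 0 := congrArg Zsqrtd.im h0
    rw [h1, h2] at hc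
    exact not_isCoprime_zero_zero hc
  have hI := ideal_pow5 _ _ _ hzz hcz
  obtain ⟨α, hα⟩ := I_principal d hd _ _ hz hI
  rw [hα, Ideal.span_singleton_pow, Ideal.span_singleton_eq_span_singleton] at hI
  obtain ⟨u, hu⟩ := hI
  exact ⟨α, u, u.isUnit, by rw [← hu, mul_comm]⟩

theorem pow5_re (d : ℤ) (α : ℤ√d) : (α ^ 5).re =
    α.re * (α.re ^ 4 + 10 * d * α.re ^ 2 * α.im ^ 2 + 5 * d ^ 2 * α.im ^ 4) := by
  simp [pow_succ]; ring

theorem pow5_im (d : ℤ) (α : ℤ√d) : (α ^ 5).im =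
    α.im * (5 * α.re ^ 4 + 10 * d * α.re ^ 2 * α.im ^ 2 + d ^ 2 * α.im ^ 4) := by
  simp [pow_succ]; ring

/-- the case `d = -5` -/
theorem fifth_neg_s17 (x y n : ℤ) (hc : IsCoprime x y) (h : x ^ 2 + 5 * y ^ 2 = n ^ 5) :
    ∃ α : ℤ√(-5), (⟨x, y⟩ : ℤ√(-5)) = α ^ 5 := by
  have hn : Odd n := by
    rw [← Int.not_even_iff_odd]
    rintro ⟨k, rfl⟩
    have e : (x ^ 2 + 5 * y ^ 2) % 8 = 0 := by
      rw [h]; apply Int.emod_eq_zero_of_dvd; exact ⟨4 * k ^ 5, by ring⟩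
    have h2 : ¬ ((2 : ℤ) ∣ x ∧ (2 : ℤ) ∣ y) := fun hh => by
      have := hc.isUnit_of_dvd' hh.1 hh.2
      revert this; decide
    have : x % 8 = 0 ∨ x % 8 = 1 ∨ x % 8 = 2 ∨ x % 8 = 3 ∨ x % 8 = 4 ∨ x % 8 = 5 ∨ x % 8 = 6 ∨ x % 8 = 7 := by omega
    have : y % 8 = 0 ∨ y % 8 = 1 ∨ y % 8 = 2 ∨ y % 8 = 3 ∨ y % 8 = 4 ∨ y % 8 = 5 ∨ y % 8 = 6 ∨ y % 8 = 7 := by omega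
    apply h2
    rcases ‹x % 8 = 0 ∨ _› with h1 | h1 | h1 | h1 | h1 | h1 | h1 | h1 <;>
    rcases this with h3 | h3 | h3 | h3 | h3 | h3 | h3 | h3 <;>
    simp [h1, h3, Int.add_emod, Int.mul_emod, pow_two] at e <;> omega
  have h5 : ¬ (5 : ℤ) ∣ n := by
    rintro ⟨k, rfl⟩
    have p5 : Prime (5 : ℤ) := by norm_num
    have hx : (5 : ℤ) ∣ x := p5.dvd_of_dvd_pow (n := 2) ⟨625 * k ^ 5 - y ^ 2, by linarith⟩
    obtain ⟨x', rfl⟩ := hx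
    have hy : (5 : ℤ) ∣ y := p5.dvd_of_dvd_pow (n := 2) ⟨125 * k ^ 5 - x' ^ 2, by linarith⟩
    have := hc.isUnit_of_dvd' (Dvd.intro _ rfl) hy
    revert this; decide
  obtain ⟨α, ε, hε, e⟩ := fifth_unit (-5) (Or.inr rfl) x y n hc (by linarith) hn h5
  have hN := (Zsqrtd.norm_eq_one_iff' (by norm_num) ε).2 hε
  rw [Zsqrtd.norm_def] at hN
  have him : ε.im = 0 := by nlinarith [mul_self_nonneg ε.re, mul_self_nonneg ε.im, Int.one_le_abs (z := ε.im), sq_abs ε.im, mul_self_pos (a := ε.im)]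
  have hre : ε.re = 1 ∨ ε.re = -1 := by
    rw [him] at hN; apply mul_self_eq_one_iff.1; linarith
  rcases hre with h1 | h1
  · refine ⟨α, ?_⟩
    have : ε = 1 := by ext <;> simp [h1, him]
    rw [e, this, one_mul]
  · refine ⟨-α, ?_⟩
    have : ε = -1 := by ext <;> simp [h1, him]
    rw [e, this]; ring

theorem unit_five (k : ℕ) : ∀ x y : ℤ, 0 ≤ x → 0 ≤ y → y.toNat = k →
    (x ^ 2 - 5 * y ^ 2 = 1 ∨ x ^ 2 - 5 * y ^ 2 = -1) →
    ∃ m : ℕ, (⟨x, y⟩ : ℤ√5) = ⟨2, 1⟩ ^ m := by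
  induction k using Nat.strong_induction_on with
  | _ k ih =>
    intro x y hx hy hk h
    rcases eq_or_lt_of_le hy with h0 | h0
    · subst h0
      have : x = 1 := by rcases h with h | h <;> nlinarith
      exact ⟨0, by subst this; rfl⟩
    · have h1 : 2 * y ≤ x := by rcases h with h | h <;> nlinarith
      have h2 : x < 3 * y := by rcases h with h | h <;> nlinarith
      have h3 : 2 * x ≤ 5 * y := by rcases h with h | h <;> nlinarith
      obtain ⟨m, hm⟩ := ih (x - 2 * y).toNat (by omega) (5 * y - 2 * x) (x - 2 * y) (by omega) (by omega) rfl
        (by rcases h with h | h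
            · right; linarith
            · left; linarith)
      refine ⟨m + 1, ?_⟩
      rw [pow_succ, ← hm]
      ext <;> simp <;> ring

theorem unit_five' (ε : ℤ√5) (hε : IsUnit ε) :
    ∃ (j : ℕ) (η : ℤ√5), j < 5 ∧ (ε = ⟨2, 1⟩ ^ j * η ^ 5 ∨ ε = ⟨2, -1⟩ ^ j * η ^ 5) := by
  have hN := Int.natAbs_eq_iff.1 (Zsqrtd.norm_eq_one_iff.2 hε)
  rw [Zsqrtd.norm_def] at hN
  obtain ⟨m, hm⟩ := unit_five _ |ε.re| |ε.im| (abs_nonneg _) (abs_nonneg _) rfl (by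
    rw [sq_abs, sq_abs]
    rcases hN with h | h
    · left; push_cast at h; linarith
    · right; push_cast at h; linarith)
  have hm' : (⟨|ε.re|, -|ε.im|⟩ : ℤ√5) = ⟨2, -1⟩ ^ m := by
    have := congrArg star hm
    rw [star_pow] at this
    simpa using this
  have hj := Nat.mod_lt m (show 5 > 0 by norm_num)
  have hdm : m = m % 5 + (m / 5) * 5 := by omega
  rw [hdm, pow_add, pow_mul] at hm hm'
  rcases abs_choice ε.re with h1 | h1 <;> rcases abs_choice ε.im with h2 | h2 <;> rw [h1, h2] at hm hm'
  · exact ⟨_, _, hj, Or.inl hm⟩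
  · exact ⟨_, _, hj, Or.inr (by rw [← hm']; ext <;> simp)⟩
  · refine ⟨_, -⟨2, -1⟩ ^ (m / 5), hj, Or.inr ?_⟩
    rw [Odd.neg_pow (by decide), mul_neg, ← hm']; ext <;> simp
  · refine ⟨_, -⟨2, 1⟩ ^ (m / 5), hj, Or.inl ?_⟩
    rw [Odd.neg_pow (by decide), mul_neg, ← hm]; ext <;> simp

/-- the case `d = 5` -/
theorem fifth_pos_s17 (x y n : ℤ) (hc : IsCoprime x y) (h : x ^ 2 - 5 * y ^ 2 = n ^ 5) (hn : Odd n)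
    (hy : (5 : ℤ) ∣ y) : ∃ α : ℤ√5, (⟨x, y⟩ : ℤ√5) = α ^ 5 := by
  have p5 : Prime (5 : ℤ) := by norm_num
  have hx5 : ¬ (5 : ℤ) ∣ x := fun hx => p5.not_isUnit (hc.isUnit_of_dvd' hx hy)
  have h5 : ¬ (5 : ℤ) ∣ n := by
    rintro ⟨k, rfl⟩
    exact hx5 (p5.dvd_of_dvd_pow (n := 2) ⟨625 * k ^ 5 + y ^ 2, by linarith⟩)
  obtain ⟨α, ε, hε, e⟩ := fifth_unit 5 (Or.inl rfl) x y n hc h hn h5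
  obtain ⟨j, η, hj, hη⟩ := unit_five' ε hε
  have hX : ∀ γ : ℤ√5, ∃ Y, (γ ^ 5).im = 5 * Y := fun γ => ⟨_, by
    rw [pow5_im, show γ.im * (5 * γ.re ^ 4 + 10 * 5 * γ.re ^ 2 * γ.im ^ 2 + 5 ^ 2 * γ.im ^ 4) =
      5 * (γ.im * (γ.re ^ 4 + 10 * γ.re ^ 2 * γ.im ^ 2 + 5 * γ.im ^ 4)) by ring]⟩
  obtain ⟨Y, hY⟩ := hX (η * α)
  have e' : (⟨x, y⟩ : ℤ√5) = ⟨2, 1⟩ ^ j * (η * α) ^ 5 ∨ (⟨x, y⟩ : ℤ√5) = ⟨2, -1⟩ ^ j * (η * α) ^ 5 := by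
    rcases hη with rfl | rfl
    · left; rw [e]; ring
    · right; rw [e]; ring
  refine ⟨η * α, ?_⟩
  set γ := (η * α) ^ 5
  rcases e' with e | e <;> interval_cases j <;> first
    | (rw [e, pow_zero, one_mul])
    | (exfalso
       have e1 := congrArg Zsqrtd.re e
       have e2 := congrArg Zsqrtd.im e
       simp [pow_succ, hY] at e1 e2
       omega)

theorem cop_left {a b : ℤ} (x c : ℤ) (h : IsCoprime a b) (e : x = a + b * c) : IsCoprime x b := by
  rw [e]; exact h.add_mul_left_left c

theorem sq_dvd_two (N y t : ℤ) (k : ℤ) (hk : k = 2 ∨ k = 10) (hN : N ≠ 0)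
    (h : k * y ^ 2 = N ^ 2 * t) : N ∣ y := by
  have h1 : (k * y) ^ 2 = N ^ 2 * (k * t) := by linear_combination k * h
  have h2 : N ∣ k * y := (Int.pow_dvd_pow_iff (n := 2) (by norm_num)).1 ⟨_, h1⟩
  obtain ⟨s, hs⟩ := h2
  have h3 : s ^ 2 = k * t := by
    rw [hs, mul_pow] at h1
    exact mul_left_cancel₀ (pow_ne_zero 2 hN) h1
  have h4 : k ∣ s := by
    have d2 : (2 : ℤ) ∣ s ^ 2 → (2 : ℤ) ∣ s := (by norm_num : Prime (2 : ℤ)).dvd_of_dvd_pow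
    have d5 : (5 : ℤ) ∣ s ^ 2 → (5 : ℤ) ∣ s := (by norm_num : Prime (5 : ℤ)).dvd_of_dvd_pow
    rcases hk with rfl | rfl
    · exact d2 ⟨t, h3⟩
    · have := d2 ⟨5 * t, by linarith⟩
      have := d5 ⟨2 * t, by linarith⟩
      omega
  obtain ⟨s', rfl⟩ := h4
  refine ⟨s', mul_left_cancel₀ (show k ≠ 0 by omega) ?_⟩
  linarith

theorem fifth_neg2 (a b m : ℤ) (hc : IsCoprime a b) (h : a ^ 2 + 5 * b ^ 2 = 2 * m ^ 5) :
    ∃ β : ℤ√(-5), (⟨4 * a, 4 * b⟩ : ℤ√(-5)) = β ^ 5 := by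
  have := zdom (-5) (Or.inr rfl)
  have p5 : Prime (5 : ℤ) := by norm_num
  have p2 : Prime (2 : ℤ) := by norm_num
  have ha5 : ¬ (5 : ℤ) ∣ a := by
    rintro ⟨a', rfl⟩
    have hm : (5 : ℤ) ∣ m := by
      have : (5 : ℤ) ∣ 2 * m ^ 5 := ⟨5 * a' ^ 2 + b ^ 2, by linarith⟩
      rcases p5.dvd_or_dvd this with h | h
      · omega
      · exact p5.dvd_of_dvd_pow h
    obtain ⟨m', rfl⟩ := hm
    have hb : (5 : ℤ) ∣ b := p5.dvd_of_dvd_pow (n := 2) ⟨250 * m' ^ 5 - a' ^ 2, by linarith⟩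
    exact p5.not_isUnit (hc.isUnit_of_dvd' (Dvd.intro _ rfl) hb)
  have hpar : Even (a ^ 2 + 5 * b ^ 2) := by rw [h]; exact even_two_mul _
  have h2 : ¬ (Even a ∧ Even b) := fun hh =>
    p2.not_isUnit (hc.isUnit_of_dvd' hh.1.two_dvd hh.2.two_dvd)
  have hodd : Odd a ∧ Odd b := by
    rcases Int.even_or_odd a with ha | ha <;> rcases Int.even_or_odd b with hb | hb
    · exact absurd ⟨ha, hb⟩ h2
    · exfalso
      have : Odd (a ^ 2 + 5 * b ^ 2) :=
        (ha.pow_of_ne_zero (by norm_num)).add_odd ((by decide : Odd (5:ℤ)).mul hb.pow)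
      exact (Int.not_even_iff_odd.2 this) hpar
    · exfalso
      have : Odd (a ^ 2 + 5 * b ^ 2) :=
        ha.pow.add_even ((hb.pow_of_ne_zero (by norm_num)).mul_left _)
      exact (Int.not_even_iff_odd.2 this) hpar
    · exact ⟨ha, hb⟩
  obtain ⟨x, hx⟩ : Even (a ^ 2 - 5 * b ^ 2) :=
    hodd.1.pow.sub_odd ((by decide : Odd (5:ℤ)).mul hodd.2.pow)
  have hxy : IsCoprime x (a * b) := by
    have h2x : IsCoprime (2 * x) (a * b) := by
      have e : 2 * x = a ^ 2 - 5 * b ^ 2 := by linarith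
      rw [e]
      apply IsCoprime.mul_right
      · have h3 : IsCoprime ((-5) * b ^ 2) a := by
          apply IsCoprime.mul_left
          · rw [IsCoprime.neg_left_iff]
            exact (p5.coprime_iff_not_dvd).2 ha5
          · exact hc.symm.pow_left
        exact cop_left _ a h3 (by ring)
      · exact cop_left _ ((-5) * b) (hc.pow_left (m := 2)) (by ring)
    exact h2x.of_mul_left_right
  obtain ⟨α, hα⟩ := fifth_neg_s17 x (a * b) (m ^ 2) hxy (by
    have e1 : (2 * x) ^ 2 = (a ^ 2 - 5 * b ^ 2) ^ 2 := by rw [hx]; ring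
    have e2 : (a ^ 2 + 5 * b ^ 2) ^ 2 = 4 * m ^ 10 := by rw [h]; ring
    linarith)
  set z : ℤ√(-5) := ⟨a, b⟩ with hz
  have hzz : z ^ 2 = 2 * α ^ 5 := by
    rw [← hα, hz]; ext <;> simp [sq] <;> linarith
  have hz0 : z ≠ 0 := by
    intro h0
    have h1 : a = 0 := congrArg Zsqrtd.re h0
    exact ha5 (by rw [h1]; exact dvd_zero 5)
  have hα0 : α ≠ 0 := by
    rintro rfl
    apply hz0
    simpa using hzz
  set N := (α ^ 2).norm with hN
  have hN0 : N ≠ 0 := fun h0 => (pow_ne_zero 2 hα0) (znorm_zero (-5) (Or.inr rfl) _ h0)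
  have hNA : (N : ℤ√(-5)) = α ^ 2 * star (α ^ 2) := Zsqrtd.norm_eq_mul_conj _
  set y := z * star (α ^ 2) with hy
  have hyy : y ^ 2 = (N : ℤ√(-5)) ^ 2 * (2 * α) := by
    rw [hNA, hy, mul_pow, hzz]; ring
  have hn2 : y.norm ^ 2 = (N ^ 2) ^ 2 * (2 * α).norm := by
    have := congrArg Zsqrtd.normMonoidHom hyy
    rw [map_mul, map_pow, map_pow] at this
    change y.norm ^ 2 = (N : ℤ√(-5)).norm ^ 2 * (2 * α).norm at this
    rw [Zsqrtd.norm_intCast] at this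
    rw [this]; ring
  obtain ⟨t, ht⟩ : N ^ 2 ∣ y.norm := (Int.pow_dvd_pow_iff (n := 2) (by norm_num)).1 ⟨_, hn2⟩
  rw [Zsqrtd.norm_def] at ht
  have hre : y.re ^ 2 - 5 * y.im ^ 2 = N ^ 2 * (2 * α).re := by
    have := congrArg Zsqrtd.re hyy
    rw [← Int.cast_pow, Zsqrtd.re_smul] at this
    rw [← this]; simp [sq]; ring
  have d1 : N ∣ y.re := sq_dvd_two N y.re (t + (2 * α).re) 2 (Or.inl rfl) hN0 (by linarith)
  have d2 : N ∣ y.im := sq_dvd_two N y.im (t - (2 * α).re) 10 (Or.inr rfl) hN0 (by linarith)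
  obtain ⟨q, hq⟩ := (Zsqrtd.intCast_dvd N y).2 ⟨d1, d2⟩
  have hs0 : star (α ^ 2) ≠ 0 := by
    rw [Ne, star_eq_zero]; exact pow_ne_zero 2 hα0
  have hzq : z = α ^ 2 * q := by
    apply mul_right_cancel₀ hs0
    rw [← hy, hq, hNA]; ring
  have hqq : q ^ 2 = 2 * α := by
    apply mul_left_cancel₀ (pow_ne_zero 4 hα0)
    rw [hzq] at hzz
    linear_combination hzz
  refine ⟨q, ?_⟩
  have : (⟨4 * a, 4 * b⟩ : ℤ√(-5)) = 4 * z := by rw [hz]; ext <;> simp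
  rw [this, hzq]
  linear_combination (-(q ^ 2) - 2 * α) * q * hqq

theorem cop30 (Q : ℤ) (h2 : Odd Q) (h3 : ¬ (3 : ℤ) ∣ Q) (h5 : ¬ (5 : ℤ) ∣ Q) : IsCoprime 30 Q := by
  have e : (30 : ℤ) = 2 * (3 * 5) := by norm_num
  rw [e]
  refine IsCoprime.mul_left (Int.isCoprime_two_left.2 h2) (IsCoprime.mul_left ?_ ?_)
  · exact ((by norm_num : Prime (3 : ℤ)).coprime_iff_not_dvd).2 h3
  · exact ((by norm_num : Prime (5 : ℤ)).coprime_iff_not_dvd).2 h5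

theorem descent_s17 (k : ℕ) : ∀ (A B e M t : ℤ) (n : ℕ), B.natAbs = k → IsCoprime A B →
    A ^ 2 - 5 * B ^ 2 = e ^ 5 → Odd e → (25 : ℤ) ∣ B → B ≠ 0 → M ∣ 30 ^ n → M * B = t ^ 5 →
    False := by
  induction k using Nat.strong_induction_on with
  | _ k ih =>
    intro A B e M t n hk hc h he h25 hB0 hM hMB
    have p5 : Prime (5 : ℤ) := by norm_num
    obtain ⟨α, hα⟩ := fifth_pos_s17 A B e hc h he (by omega)
    have hA := congrArg Zsqrtd.re hα
    have hB := congrArg Zsqrtd.im hα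
    rw [pow5_re] at hA
    rw [pow5_im] at hB
    simp only at hA hB
    set p := α.re
    set q := α.im
    have hpq : IsCoprime p q := by
      rw [hA, hB] at hc
      exact hc.of_mul_left_left.of_mul_right_left
    obtain ⟨Q, hQ⟩ : ∃ Q, Q = p ^ 4 + 10 * p ^ 2 * q ^ 2 + 5 * q ^ 4 := ⟨_, rfl⟩
    have hBQ : B = 5 * q * Q := by rw [hB, hQ]; ring
    have hp5 : ¬ (5 : ℤ) ∣ p := by
      intro hp
      rw [hA] at hc
      exact p5.not_isUnit (hc.of_mul_left_left.isUnit_of_dvd' hp (by omega))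
    have hQ5 : ¬ (5 : ℤ) ∣ Q := by
      rintro ⟨c, hc'⟩
      exact hp5 (p5.dvd_of_dvd_pow (n := 4) ⟨c - 2 * p ^ 2 * q ^ 2 - q ^ 4, by linarith⟩)
    have hq5 : (5 : ℤ) ∣ q := by
      obtain ⟨c, hc'⟩ := h25
      have : (5 : ℤ) ∣ q * Q := ⟨c, by linarith⟩
      exact (p5.dvd_or_dvd this).resolve_right hQ5
    have hodd : Odd (p ^ 2 - 5 * q ^ 2) := by
      have e1 : (p ^ 2 - 5 * q ^ 2) ^ 5 = e ^ 5 := by rw [← h, hA, hB]; ring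
      have : Odd ((p ^ 2 - 5 * q ^ 2) ^ 5) := by rw [e1]; exact he.pow
      exact (Int.odd_pow' (by norm_num)).1 this
    have hQodd : Odd Q := by
      have : Q = (p ^ 2 - 5 * q ^ 2) ^ 2 + 2 * (10 * p ^ 2 * q ^ 2 - 10 * q ^ 4) := by rw [hQ]; ring
      rw [this]
      exact hodd.pow.add_even (even_two_mul _)
    have hQ3 : ¬ (3 : ℤ) ∣ Q := by
      intro h3
      have h33 : ¬ ((3 : ℤ) ∣ p ∧ (3 : ℤ) ∣ q) := fun hh =>
        (by norm_num : Prime (3 : ℤ)).not_isUnit (hpq.isUnit_of_dvd' hh.1 hh.2)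
      have e1 : Q % 3 = 0 := Int.emod_eq_zero_of_dvd h3
      rw [hQ] at e1
      have hp3 : p % 3 = 0 ∨ p % 3 = 1 ∨ p % 3 = 2 := by omega
      have hq3 : q % 3 = 0 ∨ q % 3 = 1 ∨ q % 3 = 2 := by omega
      apply h33
      rcases hp3 with h1 | h1 | h1 <;> rcases hq3 with h2 | h2 | h2 <;>
        simp [h1, h2, Int.add_emod, Int.mul_emod, pow_succ] at e1 <;> omega
    have h30 := cop30 Q hQodd hQ3 hQ5
    have hqQ : IsCoprime q Q := by
      exact (cop_left Q (10 * p ^ 2 * q + 5 * q ^ 3) (hpq.pow_left (m := 4)) (by rw [hQ]; ring)).symm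
    have hMQ : IsCoprime M Q := (h30.pow_left (m := n)).of_isCoprime_of_dvd_left hM
    have h5Q : IsCoprime (5 : ℤ) Q := (p5.coprime_iff_not_dvd).2 hQ5
    have hcop : IsCoprime (5 * M * q) Q := (h5Q.mul_left hMQ).mul_left hqQ
    obtain ⟨⟨t1, ht1⟩, ⟨e2, he2⟩⟩ := Int.eq_pow_of_mul_eq_pow_odd (c := t) hcop (k := 5) (by decide)
      (by rw [← hMB, hBQ]; ring)
    have hq0 : q ≠ 0 := by rintro h0; apply hB0; rw [hBQ, h0]; ring
    refine ih (2 * q ^ 2).natAbs ?_ (p ^ 2 + 5 * q ^ 2) (2 * q ^ 2) e2 (16 * (5 * M) ^ 2)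
      (2 * t1 ^ 2) (4 + 2 * n) rfl ?_ ?_ ?_ ?_ ?_ ?_ ?_
    · rw [← hk]
      zify
      rw [hBQ, abs_mul, abs_mul, abs_mul, abs_pow]
      have hq1 : 1 ≤ |q| := Int.one_le_abs hq0
      have hQ1 : q ^ 2 ≤ Q := by
        rw [hQ]
        have : q ^ 2 ≤ q ^ 4 := by
          have : 1 ≤ q ^ 2 := by nlinarith [sq_abs q]
          nlinarith
        nlinarith [sq_nonneg (p ^ 2), sq_nonneg (p * q), sq_nonneg (q ^ 2), pow_two_nonneg (p ^ 2)]
      rw [abs_of_nonneg (le_trans (sq_nonneg q) hQ1)]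
      norm_num
      rw [← sq_abs] at hQ1
      rw [← sq_abs]
      have : 0 < |q| ^ 2 := by positivity
      nlinarith
    · apply IsCoprime.mul_right
      · apply IsCoprime.symm
        rw [Int.isCoprime_two_left]
        have : p ^ 2 + 5 * q ^ 2 = (p ^ 2 - 5 * q ^ 2) + 2 * (5 * q ^ 2) := by ring
        rw [this]
        exact hodd.add_even (even_two_mul _)
      · apply IsCoprime.pow_right
        exact cop_left _ (5 * q) (hpq.pow_left (m := 2)) (by ring)
    · rw [← he2, hQ]; ring
    · rw [he2] at hQodd
      exact (Int.odd_pow' (by norm_num)).1 hQodd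
    · obtain ⟨c, hc'⟩ := hq5
      exact ⟨2 * c ^ 2, by rw [hc']; ring⟩
    · positivity
    · rw [pow_add, mul_pow, ← mul_assoc, pow_mul']
      exact mul_dvd_mul (by norm_num) (pow_dvd_pow_of_dvd hM 2)
    · calc 16 * (5 * M) ^ 2 * (2 * q ^ 2) = 32 * (5 * M * q) ^ 2 := by ring
        _ = _ := by rw [ht1]; ring

theorem core3 (u v w s : ℤ) (hs : s = u^2 + 5*v^2) (h3 : ¬ (3:ℤ) ∣ s) (h5 : ¬ (5:ℤ) ∣ s)
    (hc : IsCoprime s w) (hw : w ≠ 0)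
    (h : 300 * w^5 = v * (u^4 - 10*u^2*v^2 + 5*v^4)) : False := by
  have p5 : Prime (5:ℤ) := by norm_num
  have huv : IsCoprime u v := by
    apply isCoprime_of_prime_dvd
    · rintro ⟨rfl, rfl⟩
      simp at h; exact hw h
    · rintro p hp ⟨a, rfl⟩ ⟨b, rfl⟩
      have hps : p ∣ s := ⟨p * (a^2 + 5*b^2), by rw [hs]; ring⟩
      have hpw : IsCoprime p w := hc.of_isCoprime_of_dvd_left hps
      have hd : p^5 ∣ 300 * w^5 :=
        ⟨b * (a^4 - 10*a^2*b^2 + 5*b^4), by rw [h]; ring⟩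
      have hd2 : p^5 ∣ 300 := (IsCoprime.pow hpw).dvd_of_dvd_mul_right hd
      have hn : p.natAbs^5 ∣ 300 := by
        have := Int.natAbs_dvd_natAbs.mpr hd2
        rwa [Int.natAbs_pow] at this
      have hpn : p.natAbs.Prime := Int.prime_iff_natAbs_prime.mp hp
      have hle : p.natAbs^5 ≤ 300 := Nat.le_of_dvd (by norm_num) hn
      have hlt : p.natAbs < 4 := by
        by_contra hh
        have : 4^5 ≤ p.natAbs^5 := Nat.pow_le_pow_left (by omega) 5
        omega
      have := hpn.two_le
      generalize p.natAbs = q at *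
      interval_cases q <;> revert hn <;> decide
  have h5u : ¬ (5:ℤ) ∣ u := by
    rintro ⟨a, rfl⟩
    exact h5 ⟨5*a^2 + v^2, by rw [hs]; ring⟩
  have h5Q : ¬ (5:ℤ) ∣ (u^4 - 10*u^2*v^2 + 5*v^4) := by
    rintro ⟨a, ha⟩
    exact h5u (p5.dvd_of_dvd_pow (n := 4) ⟨a + 2*u^2*v^2 - v^4, by linear_combination ha⟩)
  have h5v : (5:ℤ) ∣ v := by
    have : (5:ℤ) ∣ v * (u^4 - 10*u^2*v^2 + 5*v^4) := ⟨60*w^5, by rw [← h]; ring⟩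
    exact (p5.dvd_or_dvd this).resolve_right h5Q
  have h25 : (25:ℤ) ∣ v^2 := by
    obtain ⟨a, rfl⟩ := h5v
    exact ⟨a^2, by ring⟩
  have hv : v ≠ 0 := by
    rintro rfl
    simp at h; exact hw h
  have h3Q : ¬ (3:ℤ) ∣ (u^4 - 10*u^2*v^2 + 5*v^4) := by
    intro hd
    have e := Int.emod_eq_zero_of_dvd hd
    have h3' : ¬ (s % 3 = 0) := fun hh => h3 (Int.dvd_of_emod_eq_zero hh)
    rw [hs] at h3'
    rcases (by omega : u % 3 = 0 ∨ u % 3 = 1 ∨ u % 3 = 2) with a | a | a <;>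
    rcases (by omega : v % 3 = 0 ∨ v % 3 = 1 ∨ v % 3 = 2) with b | b | b <;>
    simp [a, b, Int.add_emod, Int.sub_emod, Int.mul_emod, pow_succ] at e h3'
  have hvQ : IsCoprime v (u^4 - 10*u^2*v^2 + 5*v^4) := by
    refine (cop_left (a := u^4) _ (-10*u^2*v + 5*v^3) huv.pow_left ?_).symm
    ring
  have hA : IsCoprime (u^2 - 5*v^2) v :=
    cop_left (a := u^2) _ (-5*v) huv.pow_left (by ring)
  by_cases hpar : Odd (u^4 - 10*u^2*v^2 + 5*v^4)
  · have hAodd : Odd (u^2 - 5*v^2) := by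
      have : u^4 - 10*u^2*v^2 + 5*v^4 = (u^2 - 5*v^2)^2 - 2 * (10 * v^4) := by ring
      rw [this] at hpar
      by_contra hh
      rw [Int.not_odd_iff_even] at hh
      obtain ⟨z, hz⟩ := hh
      rw [hz] at hpar
      obtain ⟨y, hy⟩ := hpar
      have : (z+z)^2 = 2*(2*z^2) := by ring
      omega
    have h30 := cop30 _ hpar h3Q h5Q
    have h300 : IsCoprime (300:ℤ) (u^4 - 10*u^2*v^2 + 5*v^4) :=
      (IsCoprime.pow_left (m := 2) h30).of_isCoprime_of_dvd_left (by norm_num)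
    have hcop : IsCoprime (300^4 * v) (u^4 - 10*u^2*v^2 + 5*v^4) :=
      IsCoprime.mul_left h300.pow_left hvQ
    obtain ⟨⟨t, ht⟩, ⟨e, he⟩⟩ := Int.eq_pow_of_mul_eq_pow_odd (c := 300*w) hcop (k := 5)
      (by decide) (by rw [mul_assoc, ← h]; ring)
    refine descent_s17 _ (u^2 - 5*v^2) (2*v^2) e (16*300^8) (2*t^2) 20 rfl ?_ ?_ ?_ ?_ ?_ ?_ ?_
    · exact IsCoprime.mul_right (Int.isCoprime_two_left.mpr hAodd).symm hA.pow_right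
    · rw [← he]; ring
    · rw [he] at hpar; exact (Int.odd_pow' (by norm_num)).mp hpar
    · exact h25.mul_left 2
    · positivity
    · norm_num
    · linear_combination 32 * (300^4*v + t^5) * ht
  · have hu : Odd u ∧ Odd v := by
      have hQe := Int.not_odd_iff_even.mp hpar
      have hn : ¬ (Even u ∧ Even v) := by
        rintro ⟨a, b⟩
        have := huv.isUnit_of_dvd' a.two_dvd b.two_dvd
        exact Int.prime_two.not_isUnit this
      by_cases a : Even u <;> by_cases b : Even v
      · exact absurd ⟨a, b⟩ hn
      · exfalso
        simp [Int.even_add, Int.even_sub, Int.even_mul, Int.even_pow, a, b] at hQe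
        exact absurd hQe (by decide)
      · exfalso
        simp [Int.even_add, Int.even_sub, Int.even_mul, Int.even_pow, a, b] at hQe
      · exact ⟨Int.not_even_iff_odd.mp a, Int.not_even_iff_odd.mp b⟩
    obtain ⟨⟨a, ha⟩, ⟨b, hb⟩⟩ := hu
    obtain ⟨A, hAe⟩ : ∃ A, u^2 - 5*v^2 = 2*A := ⟨2*a^2+2*a-10*b^2-10*b-2, by rw [ha, hb]; ring⟩
    have hAeven : Even A := by
      refine ⟨a^2+a-5*b^2-5*b-1, ?_⟩
      have : (2*A) = 2 * (2*a^2+2*a-10*b^2-10*b-2) := by rw [← hAe, ha, hb]; ring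
      linarith
    have hQ' : u^4 - 10*u^2*v^2 + 5*v^4 = 4 * (A^2 - 5*(v^2)^2) := by
      have : u^2 = 5*v^2 + 2*A := by linarith
      have h4 : u^4 = (5*v^2 + 2*A)^2 := by rw [← this]; ring
      rw [h4, this]; ring
    have hvo : Odd v := ⟨b, hb⟩
    have hQo : Odd (A^2 - 5*(v^2)^2) := by
      apply Even.sub_odd
      · exact hAeven.pow_of_ne_zero (by norm_num)
      · exact Odd.mul (by decide) (hvo.pow.pow)
    rw [hQ'] at h h3Q h5Q hvQ
    set Q := A^2 - 5*(v^2)^2 with hQdef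
    have h' : 75 * w^5 = v * Q := by linarith
    have h30 := cop30 _ hQo (fun hh => h3Q (hh.mul_left 4)) (fun hh => h5Q (hh.mul_left 4))
    have h75 : IsCoprime (75:ℤ) Q :=
      (IsCoprime.pow_left (m := 2) h30).of_isCoprime_of_dvd_left (by norm_num)
    have hcop : IsCoprime (75^4 * v) Q :=
      IsCoprime.mul_left h75.pow_left (IsCoprime.of_mul_right_right hvQ)
    obtain ⟨⟨t, ht⟩, ⟨e, he⟩⟩ := Int.eq_pow_of_mul_eq_pow_odd (c := 75*w) hcop (k := 5)
      (by decide) (by rw [mul_assoc, ← h']; ring)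
    rw [hAe] at hA
    refine descent_s17 _ A (v^2) e (75^8) (t^2) 16 rfl ?_ ?_ ?_ ?_ ?_ ?_ ?_
    · exact (IsCoprime.of_mul_left_right hA).pow_right
    · rw [← he]
    · rw [he] at hQo; exact (Int.odd_pow' (by norm_num)).mp hQo
    · exact h25
    · positivity
    · norm_num
    · linear_combination (75^4*v + t^5) * ht

theorem core2 (r w s : ℤ) (h : r^2 + 5*(1500*w^5)^2 = s^5) (hc : IsCoprime s w) (hw : w ≠ 0)
    (h3 : ¬ (3:ℤ) ∣ s) (h5 : ¬ (5:ℤ) ∣ s) : False := by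
  have p5 : Prime (5:ℤ) := by norm_num
  have p3 : Prime (3:ℤ) := by norm_num
  have c3 : IsCoprime (3:ℤ) s := p3.coprime_iff_not_dvd.mpr h3
  have c5 : IsCoprime (5:ℤ) s := p5.coprime_iff_not_dvd.mpr h5
  have key : ∃ α : ℤ√(-5), (⟨r, 1500*w^5⟩ : ℤ√(-5)) = α^5 := by
    by_cases ho : Odd s
    · have c2 : IsCoprime (2:ℤ) s := Int.isCoprime_two_left.mpr ho
      have c30 : IsCoprime (30:ℤ) s := by
        have := (c2.mul_left c3).mul_left c5
        norm_num at this; exact this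
      have c1500 : IsCoprime (1500:ℤ) s :=
        (IsCoprime.pow_left (m := 3) c30).of_isCoprime_of_dvd_left (by norm_num)
      have cy : IsCoprime (s^5) (1500*w^5) :=
        (c1500.symm.mul_right hc.pow_right).pow_left
      have cr : IsCoprime (r^2) (1500*w^5) :=
        cop_left (a := s^5) _ (-5*(1500*w^5)) cy (by linear_combination h)
      exact fifth_neg_s17 r _ s ((IsCoprime.pow_left_iff (by norm_num)).mp cr) h
    · obtain ⟨s1, hs1⟩ := (Int.not_odd_iff_even.mp ho).two_dvd
      subst hs1
      have hwo : Odd w := by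
        exact Int.isCoprime_two_left.mp (IsCoprime.of_mul_left_left hc)
      have h2r : (4:ℤ) ∣ r := by
        have : (4:ℤ)^2 ∣ r^2 := ⟨2*s1^5 - 5*(375*w^5)^2, by linear_combination h⟩
        exact (Int.pow_dvd_pow_iff (by norm_num)).mp this
      obtain ⟨r2, rfl⟩ := h2r
      have e : r2^2 + 5*(375*w^5)^2 = 2*s1^5 := by linarith
      have c15 : IsCoprime (15:ℤ) s1 := by
        have := (IsCoprime.of_mul_right_right c3).mul_left (IsCoprime.of_mul_right_right c5)
        norm_num at this; exact this
      have c375 : IsCoprime (375:ℤ) s1 :=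
        (IsCoprime.pow_left (m := 3) c15).of_isCoprime_of_dvd_left (by norm_num)
      have cs1 : IsCoprime (s1^5) (375*w^5) :=
        (c375.symm.mul_right (IsCoprime.of_mul_left_right hc).pow_right).pow_left
      have c2 : IsCoprime 2 (375*w^5) :=
        Int.isCoprime_two_left.mpr (Odd.mul (by decide) hwo.pow)
      have cr : IsCoprime (r2^2) (375*w^5) :=
        cop_left (a := 2*s1^5) _ (-5*(375*w^5)) (c2.mul_left cs1) (by linear_combination e)
      obtain ⟨β, hβ⟩ := fifth_neg2 r2 _ s1 ((IsCoprime.pow_left_iff (by norm_num)).mp cr) e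
      refine ⟨β, ?_⟩
      rw [← hβ]
      congr 1
      ring
  obtain ⟨α, hα⟩ := key
  have hre := congrArg Zsqrtd.re hα
  have him := congrArg Zsqrtd.im hα
  rw [pow5_re] at hre
  rw [pow5_im] at him
  simp only at hre him
  have hs : s = α.re^2 + 5*α.im^2 := by
    have : s^5 = (α.re^2 + 5*α.im^2)^5 := by
      rw [← h, him, hre]; ring
    exact (Odd.strictMono_pow (by decide : Odd 5)).injective this
  exact core3 α.re α.im w s hs h3 h5 hc hw (by linarith)

theorem core1 (r w s : ℤ) (h : r^2 + 5*(500*w^5)^2 = 27*s^5) (hc : IsCoprime (3*s) w)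
    (h5 : ¬ (5:ℤ) ∣ s) (hr : ¬ (3:ℤ) ∣ r + w^5) : False := by
  have p5 : Prime (5:ℤ) := by norm_num
  have p3 : Prime (3:ℤ) := by norm_num
  have c5 : IsCoprime (5:ℤ) s := p5.coprime_iff_not_dvd.mpr h5
  have c3w : IsCoprime 3 w := IsCoprime.of_mul_left_left hc
  have csw : IsCoprime s w := IsCoprime.of_mul_left_right hc
  by_cases ho : Odd s
  · have c2 : IsCoprime (2:ℤ) s := Int.isCoprime_two_left.mpr ho
    have c10 : IsCoprime (10:ℤ) s := by
      have := c2.mul_left c5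
      norm_num at this; exact this
    have c500 : IsCoprime (500:ℤ) s :=
      (IsCoprime.pow_left (m := 3) c10).of_isCoprime_of_dvd_left (by norm_num)
    have c27 : IsCoprime (27:ℤ) (500*w^5) := by
      have h1 : IsCoprime (27:ℤ) 500 := by norm_num
      have h2 : IsCoprime ((3:ℤ)^3) (w^5) := c3w.pow
      norm_num at h2
      exact h1.mul_right h2
    have cy : IsCoprime (27*s^5) (500*w^5) :=
      c27.mul_left (c500.symm.mul_right csw.pow_right).pow_left
    have cr2 : IsCoprime (r^2) (500*w^5) :=
      cop_left (a := 27*s^5) _ (-5*(500*w^5)) cy (by linear_combination h)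
    have cr : IsCoprime r (500*w^5) := (IsCoprime.pow_left_iff (by norm_num)).mp cr2
    have hcop : IsCoprime (2*r - 2500*w^5) (r + 1000*w^5) := by
      apply isCoprime_of_prime_dvd
      · rintro ⟨e1, e2⟩
        exact hr ⟨-333*w^5, by linear_combination e2⟩
      · rintro p hp ⟨a, ha⟩ ⟨b, hb⟩
        have q3 : ¬ p ∣ 9 := by
          intro hh
          have : p ∣ 3 := hp.dvd_of_dvd_pow (n := 2) (by norm_num; exact hh)
          have hh3 : (3:ℤ) ∣ p := (hp.associated_of_dvd p3 this).symm.dvd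
          obtain ⟨k, rfl⟩ := hh3
          exact hr ⟨k*b - 333*w^5, by linear_combination hb⟩
        have d1 : p ∣ 9 * (500*w^5) := ⟨2*b - a, by linear_combination 2*hb - ha⟩
        have d2 : p ∣ 9 * r := ⟨2*a + 5*b, by linear_combination 2*ha + 5*hb⟩
        exact hp.not_isUnit (cr.isUnit_of_dvd' ((hp.dvd_or_dvd d2).resolve_left q3)
          ((hp.dvd_or_dvd d1).resolve_left q3))
    obtain ⟨α, hα⟩ := fifth_neg_s17 _ _ (3*s) hcop (by linear_combination 9*h)
    have him := congrArg Zsqrtd.im hα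
    rw [pow5_im] at him
    simp only at him
    have hr5 : (5:ℤ) ∣ r :=
      ⟨α.im * (α.re^4 - 10*α.re^2*α.im^2 + 5*α.im^4) - 200*w^5, by linear_combination him⟩
    exact p5.not_isUnit (cr.isUnit_of_dvd' hr5 ⟨100*w^5, by ring⟩)
  · obtain ⟨s2, rfl⟩ := (Int.not_odd_iff_even.mp ho).two_dvd
    have h2r : (4:ℤ) ∣ r := by
      have : (4:ℤ)^2 ∣ r^2 := ⟨54*s2^5 - 5*(125*w^5)^2, by linear_combination h⟩
      exact (Int.pow_dvd_pow_iff (by norm_num)).mp this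
    obtain ⟨r2, rfl⟩ := h2r
    have e : r2^2 + 5*(125*w^5)^2 = 54*s2^5 := by linarith
    have cs2 : IsCoprime s2 w := IsCoprime.of_mul_left_right csw
    have c2w : IsCoprime 2 w := IsCoprime.of_mul_left_left csw
    have c5s : IsCoprime 5 s2 := IsCoprime.of_mul_right_right c5
    have c54 : IsCoprime (54:ℤ) (125*w^5) := by
      have h1 : IsCoprime (54:ℤ) 125 := by norm_num
      have h2 : IsCoprime ((3:ℤ)^3) (w^5) := c3w.pow
      have h3 : IsCoprime (2*(3:ℤ)^3) (w^5) := (c2w.pow_right).mul_left h2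
      norm_num at h3
      exact h1.mul_right h3
    have c125 : IsCoprime (125:ℤ) s2 :=
      (IsCoprime.pow_left (m := 3) c5s).of_isCoprime_of_dvd_left (by norm_num)
    have cy : IsCoprime (54*s2^5) (125*w^5) :=
      c54.mul_left (c125.symm.mul_right cs2.pow_right).pow_left
    have cr2 : IsCoprime (r2^2) (125*w^5) :=
      cop_left (a := 54*s2^5) _ (-5*(125*w^5)) cy (by linear_combination e)
    have cr : IsCoprime r2 (125*w^5) := (IsCoprime.pow_left_iff (by norm_num)).mp cr2
    have hcop : IsCoprime (2*r2 - 625*w^5) (r2 + 250*w^5) := by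
      apply isCoprime_of_prime_dvd
      · rintro ⟨e1, e2⟩
        exact hr ⟨r2 - 83*w^5, by linear_combination e2⟩
      · rintro p hp ⟨a, ha⟩ ⟨b, hb⟩
        have q3 : ¬ p ∣ 9 := by
          intro hh
          have : p ∣ 3 := hp.dvd_of_dvd_pow (n := 2) (by norm_num; exact hh)
          have hh3 : (3:ℤ) ∣ p := (hp.associated_of_dvd p3 this).symm.dvd
          obtain ⟨k, rfl⟩ := hh3
          exact hr ⟨k*b + r2 - 83*w^5, by linear_combination hb⟩
        have d1 : p ∣ 9 * (125*w^5) := ⟨2*b - a, by linear_combination 2*hb - ha⟩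
        have d2 : p ∣ 9 * r2 := ⟨2*a + 5*b, by linear_combination 2*ha + 5*hb⟩
        exact hp.not_isUnit (cr.isUnit_of_dvd' ((hp.dvd_or_dvd d2).resolve_left q3)
          ((hp.dvd_or_dvd d1).resolve_left q3))
    obtain ⟨α, hα⟩ := fifth_neg2 _ _ (3*s2) hcop (by linear_combination 9*e)
    have him := congrArg Zsqrtd.im hα
    rw [pow5_im] at him
    simp only at him
    have hr5' : (5:ℤ) ∣ 4 * r2 :=
      ⟨α.im * (α.re^4 - 10*α.re^2*α.im^2 + 5*α.im^4) - 200*w^5, by linear_combination him⟩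
    have hr5 : (5:ℤ) ∣ r2 := by omega
    exact p5.not_isUnit (cr.isUnit_of_dvd' hr5 ⟨25*w^5, by ring⟩)

theorem core_s17 (r w s : ℤ) (h : r^2 + 5*(1500*w^5)^2 = s^5) (hc : IsCoprime s w) (hw : w ≠ 0) :
    False := by
  have p5 : Prime (5:ℤ) := by norm_num
  have p3 : Prime (3:ℤ) := by norm_num
  have h5 : ¬ (5:ℤ) ∣ s := by
    intro hs
    obtain ⟨s1, hs1⟩ := id hs
    subst hs1
    have h1 : (5:ℤ) ∣ r := p5.dvd_of_dvd_pow (n := 2)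
      ⟨625*s1^5 - (1500*w^5)^2, by linear_combination h⟩
    obtain ⟨r1, rfl⟩ := h1
    have h2 : (5:ℤ) ∣ r1 := p5.dvd_of_dvd_pow (n := 2)
      ⟨25*s1^5 - 90000*w^10, by linarith⟩
    obtain ⟨r2, rfl⟩ := h2
    have h3 : (5:ℤ) ∣ r2 := p5.dvd_of_dvd_pow (n := 2)
      ⟨s1^5 - 3600*w^10, by linarith⟩
    obtain ⟨r3, rfl⟩ := h3
    have h4 : (5:ℤ) ∣ s1 := p5.dvd_of_dvd_pow (n := 5)
      ⟨r3^2 + 720*w^10, by linarith⟩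
    obtain ⟨s2, rfl⟩ := h4
    have h6 : (5:ℤ) ∣ r3 := p5.dvd_of_dvd_pow (n := 2)
      ⟨125*s2^5 - 144*w^10, by linarith⟩
    obtain ⟨r4, rfl⟩ := h6
    have h7 : (5:ℤ) ∣ 144 * w^10 :=
      ⟨25*s2^5 - r4^2, by linarith⟩
    have h8 : (5:ℤ) ∣ w^10 := by omega
    have h9 := p5.dvd_of_dvd_pow h8
    exact p5.not_isUnit (hc.isUnit_of_dvd' hs h9)
  by_cases h3 : (3:ℤ) ∣ s
  · obtain ⟨s1, rfl⟩ := h3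
    have h1 : (3:ℤ) ∣ r := p3.dvd_of_dvd_pow (n := 2)
      ⟨81*s1^5 - 15*(500*w^5)^2, by linear_combination h⟩
    obtain ⟨r1, rfl⟩ := h1
    have e : r1^2 + 5*(500*w^5)^2 = 27*s1^5 := by linarith
    have h5' : ¬ (5:ℤ) ∣ s1 := fun hh => h5 (hh.mul_left 3)
    by_cases hr : (3:ℤ) ∣ r1 + w^5
    · refine core1 (-r1) w s1 (by linear_combination e) hc h5' ?_
      intro hr'
      have : (3:ℤ) ∣ w^5 := by omega
      have := p3.dvd_of_dvd_pow this
      exact p3.not_isUnit (hc.isUnit_of_dvd' ⟨s1, rfl⟩ this)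
    · exact core1 r1 w s1 e hc h5' hr
  · exact core2 r w s h hc hw h3 h5

theorem no_rational_points_case6 (X Y : ℚ) :
    Y ^ 2 ≠ 3 ^ 3 * X ^ 5 - 2 ^ 4 * 5 ^ 7 := by
  intro h0
  obtain ⟨x, hx⟩ : ∃ x, x = 3 * X := ⟨_, rfl⟩
  obtain ⟨y, hy⟩ : ∃ y, y = 3 * Y := ⟨_, rfl⟩
  have h : y^2 = x^5 - (11250000 : ℤ) := by
    rw [hx, hy]; push_cast; linear_combination 9 * h0
  have hden : y.den^2 = x.den^5 := by
    have := congrArg Rat.den h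
    rwa [Rat.den_pow, Rat.sub_intCast_den, Rat.den_pow] at this
  have hb : x.den^2 ∣ y.den := by
    have : (x.den^2)^2 ∣ y.den^2 := ⟨x.den, by rw [hden]; ring⟩
    exact (Nat.pow_dvd_pow_iff (by norm_num)).mp this
  obtain ⟨w, hw⟩ := hb
  have hx0 : x.den ≠ 0 := x.den_nz
  have hbw : x.den = w^2 := by
    rw [hw] at hden
    have : x.den^4 * w^2 = x.den^4 * x.den := by linarith
    exact (Nat.eq_of_mul_eq_mul_left (by positivity) this).symm
  have hw0 : w ≠ 0 := by
    rintro rfl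
    simp at hbw
  have hyd : y.den = w^5 := by rw [hw, hbw]; ring
  have hcx : IsCoprime x.num (w:ℤ) := by
    have h1 : IsCoprime x.num (x.den : ℤ) := Rat.isCoprime_num_den x
    rw [hbw] at h1
    push_cast at h1
    exact (IsCoprime.pow_right_iff (by norm_num)).mp h1
  refine core_s17 y.num w x.num ?_ hcx (by exact_mod_cast hw0)
  have hwq : (w:ℚ) ≠ 0 := by exact_mod_cast hw0
  have ex : x = x.num / (w:ℚ)^2 := by
    conv_lhs => rw [← Rat.num_div_den x, hbw]
    push_cast; rfl
  have ey : y = y.num / (w:ℚ)^5 := by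
    conv_lhs => rw [← Rat.num_div_den y, hyd]
    push_cast; rfl
  have : (y.num:ℚ)^2 + 5*(1500*(w:ℚ)^5)^2 = (x.num:ℚ)^5 := by
    have h' := h
    rw [ex, ey] at h'
    generalize (x.num:ℚ) = a at *
    generalize (y.num:ℚ) = b at *
    field_simp at h'
    push_cast at h'
    linear_combination h'
  exact_mod_cast this
end
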